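/- Let θ be a reflection of the open or closed ladder of length N, let the real couplings satisfy |J_{(θi θj)}| = |J_{(ij)}| for all bonds, and let H̃ be the fermionic ladder Hamiltonian built from a Majorana family (b_k^x, b_k^y, b_k^z, c_k). Let C = (i_1, …, i_{2L}) be a loop with all couplings on its bonds nonzero and with θ i_k = i_{2L+1−k} for all k (so θ(C) = −C). Then there exists an eigenvector ψ of H̃ belonging to its least eigenvalue such that B̃(C) ψ = sgn(∏_{(ij)∈C} J_{(ij)}) ψ. In particular, if all couplings have the same sign, the loop C is vortex-free in this ground state: B̃(C) ψ = ψ. -/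

import Mathlib

noncomputable section
open scoped Classical

/-- A Majorana family indexed by `S`: self-adjoint operators on a nonzero
finite-dimensional complex Hilbert space satisfying the Clifford relations
`cᵢcⱼ + cⱼcᵢ = 2δᵢⱼ·I`. -/
def IsMajoranaFamily {V : Type*} [NormedAddCommGroup V] [InnerProductSpace ℂ V]
    [FiniteDimensional ℂ V] {S : Type*} (c : S → (V →ₗ[ℂ] V)) : Prop :=
  (∀ i, IsSelfAdjoint (c i)) ∧
    ∀ i j, c i * c j + c j * c i = if i = j then (2 : ℂ) • (1 : V →ₗ[ℂ] V) else 0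

/-- The least real eigenvalue of an endomorphism. -/
def leastEig {W : Type*} [AddCommGroup W] [Module ℂ W] (H : W →ₗ[ℂ] W) : ℝ :=
  sInf {t : ℝ | Module.End.HasEigenvalue H (t : ℂ)}

/-- Two operators anticommute. -/
def AntiCommute {A : Type*} [Ring A] (a b : A) : Prop := a * b = -(b * a)

/-- The three bond types of the ladder. -/
inductive BondType : Type
  | x | y | z
  deriving DecidableEq

/-- Bonds of the open ladder of length `N`, with vertices `0, …, 4N-1` (these are the
1-based labels `1, …, 4N` of the paper shifted by one): type-z bonds `(2j, 2j+1)` for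
`j = 0, …, 2N-1`; type-x bonds `(2j+1, 2j+2)` and type-y bonds `(2j, 2j+3)` for
`j = 0, …, 2N-2`. -/
def openBonds (N : ℕ) : List (ℕ × ℕ × BondType) :=
  ((List.range (2 * N)).map fun j => (2 * j, 2 * j + 1, BondType.z)) ++
    ((List.range (2 * N - 1)).map fun j => (2 * j + 1, 2 * j + 2, BondType.x)) ++
    ((List.range (2 * N - 1)).map fun j => (2 * j, 2 * j + 3, BondType.y))

/-- Bonds of the closed ladder: the open ladder together with the closing
type-x bond `(4N-1, 0)` and the closing type-y bond `(4N-2, 1)`. -/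
def closedBonds (N : ℕ) : List (ℕ × ℕ × BondType) :=
  openBonds N ++ [(4 * N - 1, 0, BondType.x), (4 * N - 2, 1, BondType.y)]

/-- The `16N` Majorana generators `b_k^α` and `c_k` of the fermionic ladder, indexed by
a vertex `k` together with `some α` (giving `b_k^α`) or `none` (giving `c_k`). -/
def ladderGen {A : Type*} (b : ℕ → BondType → A) (c : ℕ → A) :
    ℕ × Option BondType → A
  | (k, none) => c k
  | (k, some α) => b k α

/-- The `16N` operators `b_k^α, c_k` (`k < 4N`) form a Majorana family. -/
def IsLadderMajorana {V : Type*} [NormedAddCommGroup V] [InnerProductSpace ℂ V]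
    [FiniteDimensional ℂ V] (N : ℕ) (b : ℕ → BondType → (V →ₗ[ℂ] V))
    (c : ℕ → (V →ₗ[ℂ] V)) : Prop :=
  IsMajoranaFamily fun p : Fin (4 * N) × Option BondType => ladderGen b c ((p.1 : ℕ), p.2)

section LadderOps

variable {A : Type*} [Ring A] [Algebra ℂ A]

/-- The bond operator `u_{ij} = i b_i^t b_j^t` of the bond `e = (i, j, t)`. -/
def uOp (b : ℕ → BondType → A) (e : ℕ × ℕ × BondType) : A :=
  Complex.I • (b e.1 e.2.2 * b e.2.1 e.2.2)

/-- The spin representative `σ̃_m^α = i b_m^α c_m`. -/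
def sigmaOp (b : ℕ → BondType → A) (c : ℕ → A) (m : ℕ) (α : BondType) : A :=
  Complex.I • (b m α * c m)

/-- `γ_k^5 = b_k^x b_k^y b_k^z c_k`. -/
def gamma5 (b : ℕ → BondType → A) (c : ℕ → A) (k : ℕ) : A :=
  b k BondType.x * b k BondType.y * b k BondType.z * c k

/-- The term `⟨ij⟩ = J_{(ij)} u_{ij} i c_i c_j` of the fermionic ladder Hamiltonian
on the bond `e = (i, j, t)`. -/
def bondTerm (J : ℕ × ℕ → ℝ) (b : ℕ → BondType → A) (c : ℕ → A)
    (e : ℕ × ℕ × BondType) : A :=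
  (J (e.1, e.2.1) : ℂ) • (uOp b e * (Complex.I • (c e.1 * c e.2.1)))

/-- The fermionic ladder Hamiltonian `H̃ = Σ_{(ij)} J_{(ij)} u_{ij} i c_i c_j`,
each bond counted once. -/
def fermH (J : ℕ × ℕ → ℝ) (b : ℕ → BondType → A) (c : ℕ → A)
    (bonds : List (ℕ × ℕ × BondType)) : A :=
  (bonds.map (bondTerm J b c)).sum

end LadderOps

/-- A (cyclic) loop: a length `len`, the vertex `v k` at cyclic position `k < len`, and
the type `t k` of the bond joining `v k` to `v ((k+1) % len)`. -/
structure Loop where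
  len : ℕ
  v : ℕ → ℕ
  t : ℕ → BondType

/-- `L` is a loop of the lattice with bond list `bonds`: its vertices are distinct and
consecutive vertices are joined by a bond of `bonds` (traversed in either direction)
of the indicated type. -/
def Loop.IsLoopOf (L : Loop) (bonds : List (ℕ × ℕ × BondType)) : Prop :=
  3 ≤ L.len ∧
    (∀ k < L.len, ∀ k' < L.len, L.v k = L.v k' → k = k') ∧
    ∀ k < L.len,
      (L.v k, L.v ((k + 1) % L.len), L.t k) ∈ bonds ∨
        (L.v ((k + 1) % L.len), L.v k, L.t k) ∈ bonds

/-- The fermionic vortex operator `B̃(C) = -u_{i₁i₂} u_{i₂i₃} ⋯ u_{i_ℓ i₁}` of a loop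
(an ordered product around the loop). -/
def vortexOp {A : Type*} [Ring A] [Algebra ℂ A] (b : ℕ → BondType → A) (L : Loop) : A :=
  -((List.range L.len).map fun k => uOp b (L.v k, L.v ((k + 1) % L.len), L.t k)).prod

/-- A reflection of the ladder (with vertex set `{0, …, 4N-1}` and bond list `bonds`):
a fixed-point-free involution `θ` of the vertex set mapping bonds to bonds (preserving
types), together with a partition of the vertices into two sets `Λ₋, Λ₊` interchanged
by `θ`, such that every bond either has both endpoints on the same side or is of the
form `(i, θ i)`. -/
structure LadderReflection (N : ℕ) (bonds : List (ℕ × ℕ × BondType)) where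
  θ : ℕ → ℕ
  Λm : Finset ℕ
  Λp : Finset ℕ
  mapsV : ∀ v < 4 * N, θ v < 4 * N
  invol : ∀ v < 4 * N, θ (θ v) = v
  nofix : ∀ v < 4 * N, θ v ≠ v
  union : Λm ∪ Λp = Finset.range (4 * N)
  disj : Disjoint Λm Λp
  swap_m : ∀ v ∈ Λm, θ v ∈ Λp
  swap_p : ∀ v ∈ Λp, θ v ∈ Λm
  mapsB : ∀ e ∈ bonds,
    (θ e.1, θ e.2.1, e.2.2) ∈ bonds ∨ (θ e.2.1, θ e.1, e.2.2) ∈ bonds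
  sides : ∀ e ∈ bonds,
    (e.1 ∈ Λm ∧ e.2.1 ∈ Λm) ∨ (e.1 ∈ Λp ∧ e.2.1 ∈ Λp) ∨ θ e.1 = e.2.1 ∨ θ e.2.1 = e.1


section MatrixPart
open Matrix
open scoped ComplexOrder

/-- `t` is the trace norm of the Hermitian matrix `K`, through a diagonalization. -/
def HasTr {n : Type*} [Fintype n] [DecidableEq n] (K : Matrix n n ℂ) (t : ℝ) : Prop :=
  ∃ (W : Matrix n n ℂ) (l : n → ℝ), Wᴴ * W = 1 ∧ W * Wᴴ = 1 ∧
    K = W * diagonal (fun i => (l i : ℂ)) * Wᴴ ∧ t = ∑ i, |l i|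

lemma exists_diag {n : Type*} [Fintype n] [DecidableEq n] (K : Matrix n n ℂ)
    (hK : K.IsHermitian) :
    ∃ (W : Matrix n n ℂ) (l : n → ℝ), Wᴴ * W = 1 ∧ W * Wᴴ = 1 ∧
      K = W * diagonal (fun i => (l i : ℂ)) * Wᴴ := by
  refine ⟨hK.eigenvectorUnitary, hK.eigenvalues, ?_, ?_, ?_⟩
  · exact Unitary.coe_star_mul_self hK.eigenvectorUnitary
  · exact Unitary.coe_mul_star_self hK.eigenvectorUnitary
  · have := hK.spectral_theorem
    rw [Unitary.conjStarAlgAut_apply] at this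
    exact this

lemma exists_hasTr {n : Type*} [Fintype n] [DecidableEq n] (K : Matrix n n ℂ)
    (hK : K.IsHermitian) : ∃ t, HasTr K t := by
  obtain ⟨W, l, h1, h2, h3⟩ := exists_diag K hK
  exact ⟨_, W, l, h1, h2, h3, rfl⟩

lemma HasTr.le {n : Type*} [Fintype n] [DecidableEq n] {K : Matrix n n ℂ} {t : ℝ}
    (h : HasTr K t) (U : Matrix n n ℂ) (hU : Uᴴ = U) (hU2 : U * U = 1) :
    (trace (U * K)).re ≤ t := by
  obtain ⟨W, l, h1, h2, rfl, rfl⟩ := h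
  have e : trace (U * (W * diagonal (fun i => (l i : ℂ)) * Wᴴ)) =
      ∑ i, (Wᴴ * U * W) i i * (l i : ℂ) := by
    rw [← Matrix.mul_assoc, trace_mul_comm, ← Matrix.mul_assoc, ← Matrix.mul_assoc]
    simp [trace, mul_diagonal]
  have hu : (Wᴴ * U * W) ∈ Matrix.unitaryGroup n ℂ := by
    rw [Matrix.mem_unitaryGroup_iff, Matrix.star_eq_conjTranspose]
    simp only [conjTranspose_mul, conjTranspose_conjTranspose, hU]
    calc Wᴴ * U * W * (Wᴴ * (U * W)) = Wᴴ * (U * (W * Wᴴ) * U) * W := by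
          simp only [Matrix.mul_assoc]
      _ = 1 := by rw [h2, Matrix.mul_one, hU2, Matrix.mul_one, h1]
  rw [e, Complex.re_sum]
  refine Finset.sum_le_sum fun i _ => ?_
  refine (Complex.re_le_norm _).trans ?_
  rw [norm_mul, Complex.norm_real, Real.norm_eq_abs]
  have := entry_norm_bound_of_unitary hu i i
  nlinarith [abs_nonneg (l i)]

lemma HasTr.exists_inv {n : Type*} [Fintype n] [DecidableEq n] {K : Matrix n n ℂ} {t : ℝ}
    (h : HasTr K t) : ∃ U : Matrix n n ℂ, Uᴴ = U ∧ U * U = 1 ∧ trace (U * K) = t := by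
  obtain ⟨W, l, h1, h2, rfl, rfl⟩ := h
  let s : n → ℝ := fun i => if l i < 0 then -1 else 1
  have hs : ∀ i, s i * s i = 1 := fun i => by simp only [s]; split_ifs <;> norm_num
  have hsl : ∀ i, s i * l i = |l i| := fun i => by
    simp only [s]; split_ifs with h
    · rw [abs_of_neg h]; ring
    · rw [abs_of_nonneg (not_lt.1 h)]; ring
  have key : ∀ A B : Matrix n n ℂ, (W * A * Wᴴ) * (W * B * Wᴴ) = W * (A * B) * Wᴴ := by
    intro A B
    calc _ = W * A * (Wᴴ * W) * B * Wᴴ := by simp only [Matrix.mul_assoc]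
      _ = _ := by rw [h1, Matrix.mul_one]; simp only [Matrix.mul_assoc]
  refine ⟨W * diagonal (fun i => (s i : ℂ)) * Wᴴ, ?_, ?_, ?_⟩
  · simp [conjTranspose_mul, Matrix.mul_assoc, diagonal_conjTranspose]
    congr 3
    ext i; simp
  · rw [key, diagonal_mul_diagonal]
    have : (fun i => (s i : ℂ) * (s i : ℂ)) = fun _ => 1 := by
      ext i; exact_mod_cast hs i
    rw [this, diagonal_one, Matrix.mul_one, h2]
  · rw [key, trace_mul_comm, ← Matrix.mul_assoc, h1, Matrix.one_mul, diagonal_mul_diagonal,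
      trace_diagonal]
    push_cast
    refine Finset.sum_congr rfl fun i _ => ?_
    exact_mod_cast hsl i

lemma exists_matAbs {n : Type*} [Fintype n] [DecidableEq n] (M : Matrix n n ℂ)
    (hM : M.IsHermitian) : ∃ Z : Matrix n n ℂ, Zᴴ = Z ∧ Z * Z = M * M ∧
      (∀ B, B * (M * M) = (M * M) * B → B * Z = Z * B) ∧ (Z - M).PosSemidef := by
  obtain ⟨W, l, h1, h2, rfl⟩ := exists_diag M hM
  have key : ∀ A B : Matrix n n ℂ, (W * A * Wᴴ) * (W * B * Wᴴ) = W * (A * B) * Wᴴ := by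
    intro A B
    calc _ = W * A * (Wᴴ * W) * B * Wᴴ := by simp only [Matrix.mul_assoc]
      _ = _ := by rw [h1, Matrix.mul_one]; simp only [Matrix.mul_assoc]
  refine ⟨W * diagonal (fun i => ((|l i| : ℝ) : ℂ)) * Wᴴ, ?_, ?_, ?_, ?_⟩
  · simp [conjTranspose_mul, Matrix.mul_assoc, diagonal_conjTranspose]
    congr 3
    ext i; simp
  · rw [key, key, diagonal_mul_diagonal, diagonal_mul_diagonal]
    congr 3
    ext i
    exact_mod_cast abs_mul_abs_self (l i)
  · intro B hB
    rw [key, diagonal_mul_diagonal] at hB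
    have hB' : B = W * (Wᴴ * B * W) * Wᴴ := by
      calc B = (W * Wᴴ) * B * (W * Wᴴ) := by rw [h2, Matrix.one_mul, Matrix.mul_one]
        _ = _ := by simp only [Matrix.mul_assoc]
    generalize Wᴴ * B * W = C at hB'
    subst hB'
    rw [key, key] at hB ⊢
    congr 2
    have hC : C * diagonal (fun i => (l i : ℂ) * (l i : ℂ)) =
        diagonal (fun i => (l i : ℂ) * (l i : ℂ)) * C := by
      have := congrArg (fun X => Wᴴ * X * W) hB
      have kk : ∀ X : Matrix n n ℂ, Wᴴ * (W * X * Wᴴ) * W = X := fun X => by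
        calc _ = (Wᴴ * W) * X * (Wᴴ * W) := by simp only [Matrix.mul_assoc]
          _ = X := by rw [h1, Matrix.one_mul, Matrix.mul_one]
      simpa only [kk] using this
    ext i j
    have hij := congrFun (congrFun hC i) j
    simp only [mul_diagonal, diagonal_mul] at hij ⊢
    by_cases hc : C i j = 0
    · simp [hc]
    · have : (l j : ℂ) * l j = l i * l i := by
        apply mul_left_cancel₀ hc
        rw [hij, mul_comm]
      have h3 : l j * l j = l i * l i := by exact_mod_cast this
      rw [abs_eq_abs.2 (mul_self_eq_mul_self_iff.1 h3), mul_comm]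
  · rw [← Matrix.sub_mul, ← Matrix.mul_sub, diagonal_sub]
    apply PosSemidef.mul_mul_conjTranspose_same
    apply PosSemidef.diagonal
    intro i
    have : (0:ℝ) ≤ |l i| - l i := sub_nonneg.2 (le_abs_self _)
    show (0:ℂ) ≤ ((|l i| : ℝ) : ℂ) - l i
    rw [← Complex.ofReal_sub]
    exact Complex.zero_le_real.2 this

/-- The reflection inequality for trace norms. -/
lemma trace_reflection {n : Type*} [Fintype n] [DecidableEq n] (P Q : Matrix n n ℂ)
    (d : n → ℝ) (hd : ∀ i, 0 ≤ d i) (t t1 t2 : ℝ)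
    (h : HasTr (fromBlocks P (diagonal fun i => Complex.I * d i)
      (diagonal fun i => -(Complex.I * d i)) Q) t)
    (h1 : HasTr (fromBlocks P (diagonal fun i => Complex.I * d i)
      (diagonal fun i => -(Complex.I * d i)) (-P)) t1)
    (h2 : HasTr (fromBlocks (-Q) (diagonal fun i => Complex.I * d i)
      (diagonal fun i => -(Complex.I * d i)) Q) t2) :
    2 * t ≤ t1 + t2 := by
  obtain ⟨U, hU, hU2, hUt⟩ := h.exists_inv
  obtain ⟨A, B, C, D, rfl⟩ : ∃ A B C D, U = fromBlocks A B C D :=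
    ⟨_, _, _, _, (fromBlocks_toBlocks U).symm⟩
  rw [fromBlocks_conjTranspose, fromBlocks_inj] at hU
  obtain ⟨hA, hC, hB, hD⟩ := hU
  rw [fromBlocks_multiply, ← fromBlocks_one, fromBlocks_inj] at hU2
  obtain ⟨e1, e2, e3, e4⟩ := hU2
  obtain ⟨Z, hZ, hZ2, hZc, hZp⟩ := exists_matAbs (fromBlocks 0 B C 0)
    (by rw [IsHermitian, fromBlocks_conjTranspose, hB, hC]; simp)
  obtain ⟨Z1, Z3, Z4, Z2, rfl⟩ : ∃ A B C D, Z = fromBlocks A B C D :=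
    ⟨_, _, _, _, (fromBlocks_toBlocks Z).symm⟩
  have hsq : (fromBlocks 0 B C 0 : Matrix (n ⊕ n) (n ⊕ n) ℂ) * fromBlocks 0 B C 0
      = fromBlocks (B * C) 0 0 (C * B) := by
    rw [fromBlocks_multiply]; simp
  rw [hsq] at hZ2 hZc
  -- block diagonal
  have g := hZc (fromBlocks 1 0 0 (-1)) (by simp [fromBlocks_multiply])
  simp only [fromBlocks_multiply, fromBlocks_inj] at g
  have g3 : Z3 = 0 := by
    have := g.2.1
    simp only [Matrix.one_mul, Matrix.zero_mul, add_zero, Matrix.mul_zero, zero_add,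
      Matrix.mul_neg, Matrix.mul_one] at this
    ext i j
    have := congrFun (congrFun this i) j
    exact self_eq_neg.1 this
  have g4 : Z4 = 0 := by
    have := g.2.2.1
    simp only [Matrix.zero_mul, add_zero, Matrix.mul_zero, zero_add,
      Matrix.neg_mul, Matrix.one_mul, Matrix.mul_one] at this
    ext i j
    have := congrFun (congrFun this i) j
    exact neg_eq_self.1 this
  subst g3 g4
  have hBC : B * C = 1 - A * A := by rw [← e1]; abel
  have hCB : C * B = 1 - D * D := by rw [← e4]; abel
  have gd := hZc (fromBlocks A 0 0 D) (by
    simp only [fromBlocks_multiply, hBC, hCB]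
    simp [Matrix.mul_sub, Matrix.sub_mul, Matrix.mul_assoc])
  simp only [fromBlocks_multiply, fromBlocks_inj, Matrix.zero_mul, add_zero, Matrix.mul_zero,
    zero_add] at gd
  obtain ⟨gA, -, -, gD⟩ := gd
  simp only [fromBlocks_multiply, fromBlocks_inj, Matrix.zero_mul, add_zero, Matrix.mul_zero,
    zero_add] at hZ2
  obtain ⟨z1, -, -, z2⟩ := hZ2
  rw [fromBlocks_conjTranspose, fromBlocks_inj] at hZ
  obtain ⟨hZ1, -, -, hZ2'⟩ := hZ
  have i1 := h1.le (fromBlocks A (Complex.I • Z1) (-(Complex.I • Z1)) (-A))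
    (by rw [fromBlocks_conjTranspose]; simp [hA, hZ1])
    (by
      rw [fromBlocks_multiply, ← fromBlocks_one, fromBlocks_inj]
      refine ⟨?_, ?_, ?_, ?_⟩
      · simp [smul_smul, z1, hBC]
      · simp [gA]
      · simp [gA]
      · simp [smul_smul, z1, hBC])
  have i2 := h2.le (fromBlocks (-D) (Complex.I • Z2) (-(Complex.I • Z2)) D)
    (by rw [fromBlocks_conjTranspose]; simp [hD, hZ2'])
    (by
      rw [fromBlocks_multiply, ← fromBlocks_one, fromBlocks_inj]
      refine ⟨?_, ?_, ?_, ?_⟩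
      · simp [smul_smul, z2, hCB]
      · simp [gD]
      · simp [gD]
      · simp [smul_smul, z2, hCB])
  have q : ∀ i, 0 ≤ (Z1 i i + Z2 i i + Complex.I * B i i - Complex.I * C i i).re := by
    intro i
    have := hZp.re_dotProduct_nonneg (Sum.elim (Pi.single i 1) (Pi.single i (-Complex.I)))
    simp [dotProduct, Fintype.sum_sum_type, Pi.single_apply, Matrix.mulVec,
      apply_ite Complex.re, apply_ite Complex.im] at this ⊢
    linarith
  have r0 := congrArg Complex.re hUt
  simp only [fromBlocks_multiply, trace, Fintype.sum_sum_type, diag_apply, fromBlocks_apply₁₁,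
    fromBlocks_apply₂₂, Matrix.add_apply, mul_diagonal, Complex.add_re, Complex.ofReal_re,
    Complex.re_sum, Finset.sum_add_distrib] at i1 i2 r0
  have hq : 0 ≤ ∑ i, d i * (Z1 i i + Z2 i i + Complex.I * B i i - Complex.I * C i i).re :=
    Finset.sum_nonneg fun i _ => mul_nonneg (hd i) (q i)
  simp [Finset.sum_add_distrib, mul_add] at i1 i2 r0 hq
  simp only [mul_comm] at i1 i2 r0 hq
  linarith
end MatrixPart

section Energy
open Matrix

variable {V : Type*} [AddCommGroup V] [Module ℂ V] {n : Type*} [Fintype n] [DecidableEq n]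

/-- linear combination of Majoranas -/
def cw (c : n → (V →ₗ[ℂ] V)) (w : n → ℂ) : V →ₗ[ℂ] V := ∑ j, w j • c j

/-- quadratic Majorana operator -/
def quadOp (c : n → (V →ₗ[ℂ] V)) (K : Matrix n n ℂ) : V →ₗ[ℂ] V :=
  (1 / 2 : ℂ) • ∑ j, ∑ k, K j k • (c j * c k)

lemma cw_smul (c : n → (V →ₗ[ℂ] V)) (a : ℂ) (w : n → ℂ) : cw c (a • w) = a • cw c w := by
  simp [cw, Finset.smul_sum, smul_smul]

lemma c_cw (c : n → (V →ₗ[ℂ] V))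
    (hc : ∀ i j, c i * c j + c j * c i = if i = j then (2 : ℂ) • (1 : V →ₗ[ℂ] V) else 0)
    (w : n → ℂ) (i : n) : c i * cw c w = (2 * w i) • (1 : V →ₗ[ℂ] V) - cw c w * c i := by
  have : ∀ j, w j • (c i * c j) + w j • (c j * c i) =
      if i = j then (2 * w j) • (1 : V →ₗ[ℂ] V) else 0 := by
    intro j
    rw [← smul_add, hc]
    split_ifs
    · rw [smul_smul, mul_comm]
    · simp
  rw [eq_sub_iff_add_eq, cw, Finset.mul_sum, Finset.sum_mul, ← Finset.sum_add_distrib]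
  simp only [mul_smul_comm, smul_mul_assoc]
  simp [this]

lemma cw_cw (c : n → (V →ₗ[ℂ] V))
    (hc : ∀ i j, c i * c j + c j * c i = if i = j then (2 : ℂ) • (1 : V →ₗ[ℂ] V) else 0)
    (w w' : n → ℂ) : cw c w * cw c w' = (2 * (w ⬝ᵥ w')) • (1 : V →ₗ[ℂ] V) - cw c w' * cw c w := by
  conv_lhs => rw [cw, Finset.sum_mul]
  simp only [smul_mul_assoc, c_cw c hc, smul_sub, Finset.sum_sub_distrib, smul_smul]
  congr 1
  · rw [← Finset.sum_smul, dotProduct, Finset.mul_sum]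
    congr 1
    exact Finset.sum_congr rfl fun i _ => by ring
  · conv_rhs => rw [cw, cw, Finset.mul_sum]
    simp [cw]

lemma quad_cw (c : n → (V →ₗ[ℂ] V))
    (hc : ∀ i j, c i * c j + c j * c i = if i = j then (2 : ℂ) • (1 : V →ₗ[ℂ] V) else 0)
    (K : Matrix n n ℂ) (hK : ∀ i j, K j i = - K i j) (w : n → ℂ) :
    quadOp c K * cw c w = cw c w * quadOp c K + (2 : ℂ) • cw c (K *ᵥ w) := by
  have h1 : ∀ j k, c j * c k * cw c w =
      cw c w * (c j * c k) + (2 * w k) • c j - (2 * w j) • c k := by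
    intro j k
    rw [mul_assoc, c_cw c hc, mul_sub, ← mul_assoc, c_cw c hc, sub_mul, mul_assoc]
    simp only [mul_smul_comm, smul_mul_assoc, mul_one, one_mul]
    abel
  have h2 : ∑ j, ∑ k, K j k • (2 * w k) • c j = (2 : ℂ) • cw c (K *ᵥ w) := by
    simp only [cw, Finset.smul_sum, mulVec, dotProduct, Finset.sum_smul, smul_smul]
    exact Finset.sum_congr rfl fun j _ => Finset.sum_congr rfl fun k _ => by congr 1; ring
  have h3 : ∑ j, ∑ k, K j k • (2 * w j) • c k = - (2 : ℂ) • cw c (K *ᵥ w) := by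
    rw [Finset.sum_comm]
    simp only [cw, Finset.smul_sum, mulVec, dotProduct, Finset.sum_smul, smul_smul]
    refine Finset.sum_congr rfl fun j _ => Finset.sum_congr rfl fun k _ => ?_
    rw [hK j k]; congr 1; ring
  simp only [quadOp, smul_mul_assoc, Finset.sum_mul, h1, smul_sub, smul_add,
    Finset.sum_sub_distrib, Finset.sum_add_distrib, h2, h3, mul_smul_comm, Finset.mul_sum]
  module

lemma energy_formula (c : n → (V →ₗ[ℂ] V))
    (hc : ∀ i j, c i * c j + c j * c i = if i = j then (2 : ℂ) • (1 : V →ₗ[ℂ] V) else 0)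
    (K : Matrix n n ℂ) (hK : ∀ i j, K j i = - K i j) (t : ℝ) (ht : HasTr K t)
    (ψ : V) (hψ : ψ ≠ 0) (E : ℝ) (hE : quadOp c K ψ = (E : ℂ) • ψ)
    (hmin : ∀ (w : n → ℂ) (E' : ℝ), E' < E →
      quadOp c K (cw c w ψ) = (E' : ℂ) • cw c w ψ → cw c w ψ = 0) : E = - t / 2 := by
  obtain ⟨W, l, h1, h2, h3, rfl⟩ := ht
  have kill : ∀ (w : n → ℂ) (r : ℝ), r < 0 → K *ᵥ w = (r : ℂ) • w → cw c w ψ = 0 := by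
    intro w r hr hw
    apply hmin w (E + 2 * r) (by linarith)
    have := congrArg (fun f : V →ₗ[ℂ] V => f ψ) (quad_cw c hc K hK w)
    simp only [Module.End.mul_apply, LinearMap.add_apply, LinearMap.smul_apply, hw, cw_smul,
      hE, map_smul] at this
    rw [this]
    push_cast
    module
  have col : ∀ m, K *ᵥ (fun j => W j m) = (l m : ℂ) • (fun j => W j m) := by
    intro m
    have : K * W = W * diagonal (fun i => (l i : ℂ)) := by
      rw [h3, Matrix.mul_assoc, h1, Matrix.mul_one]
    ext j
    have := congrFun (congrFun this j) m
    rw [mul_diagonal, Matrix.mul_apply] at this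
    simp only [mulVec, dotProduct, this, Pi.smul_apply, smul_eq_mul, mul_comm]
  have colc : ∀ m, K *ᵥ (fun j => star (W j m)) = ((-l m : ℝ) : ℂ) • (fun j => star (W j m)) := by
    intro m
    have : Wᴴ * K = diagonal (fun i => (l i : ℂ)) * Wᴴ := by
      rw [h3, Matrix.mul_assoc, ← Matrix.mul_assoc, h1, Matrix.one_mul]
    ext k
    have := congrFun (congrFun this m) k
    rw [diagonal_mul, Matrix.mul_apply] at this
    simp only [conjTranspose_apply] at this
    simp only [mulVec, dotProduct, Pi.smul_apply, smul_eq_mul, Complex.ofReal_neg, neg_mul, ← this]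
    rw [← Finset.sum_neg_distrib]
    exact Finset.sum_congr rfl fun j _ => by rw [hK j k]; ring
  have hQ : quadOp c K = (1 / 2 : ℂ) • ∑ m, (l m : ℂ) •
      (cw c (fun j => W j m) * cw c (fun j => star (W j m))) := by
    rw [quadOp]
    congr 1
    have : ∀ j k, K j k = ∑ m, (l m : ℂ) * (W j m * star (W k m)) := by
      intro j k
      rw [h3, Matrix.mul_apply]
      exact Finset.sum_congr rfl fun m _ => by rw [mul_diagonal, conjTranspose_apply]; ring
    simp only [this, Finset.sum_smul, cw, Finset.sum_mul, Finset.mul_sum, Finset.smul_sum,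
      smul_mul_assoc, mul_smul_comm, smul_smul]
    rw [Finset.sum_comm_cycle]
    refine Finset.sum_congr rfl fun j _ => ?_
    rw [Finset.sum_comm]
    refine Finset.sum_congr rfl fun k _ => Finset.sum_congr rfl fun m _ => ?_
    congr 1; try ring
  have hterm : ∀ m, (l m : ℂ) • (cw c (fun j => W j m) (cw c (fun j => star (W j m)) ψ)) =
      ((l m - |l m| : ℝ) : ℂ) • ψ := by
    intro m
    rcases lt_trichotomy (l m) 0 with h | h | h
    · have k := kill _ _ h (col m)
      have hd : (fun j => W j m) ⬝ᵥ (fun j => star (W j m)) = 1 := by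
        have := congrFun (congrFun h1 m) m
        rw [Matrix.mul_apply] at this
        simp only [conjTranspose_apply, one_apply_eq] at this
        rw [← this]
        exact Finset.sum_congr rfl fun j _ => mul_comm _ _
      have a := congrArg (fun f : V →ₗ[ℂ] V => f ψ)
        (cw_cw c hc (fun j => W j m) (fun j => star (W j m)))
      simp only [Module.End.mul_apply, LinearMap.sub_apply, k, map_zero, hd] at a
      rw [a, abs_of_neg h]
      simp only [LinearMap.smul_apply, Module.End.one_apply]
      push_cast
      module
    · simp [h]
    · have k := kill _ _ (neg_lt_zero.2 h) (colc m)
      rw [k, abs_of_pos h]; simp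
  have htr : ∑ m, l m = 0 := by
    have : trace K = 0 := by
      refine Finset.sum_eq_zero fun i _ => ?_
      exact self_eq_neg.1 (hK i i)
    rw [h3, trace_mul_comm, ← Matrix.mul_assoc, h1, Matrix.one_mul, trace_diagonal] at this
    exact_mod_cast this
  have hfin : ((1 / 2 : ℂ) * ((∑ m, (l m - |l m|) : ℝ) : ℂ)) • ψ = (E : ℂ) • ψ := by
    rw [← hE, hQ]
    simp only [LinearMap.smul_apply, LinearMap.sum_apply, Module.End.mul_apply, hterm]
    rw [← Finset.sum_smul, smul_smul]
    push_cast
    rfl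
  have := smul_left_injective ℂ hψ hfin
  rw [Finset.sum_sub_distrib, htr] at this
  have h : (1/2) * (0 - ∑ m, |l m|) = E := by
    apply Complex.ofReal_injective
    rw [← this]; push_cast; ring
  rw [← h]; ring
end Energy

section Bonds

/-- Combinatorial facts about the bond lists used in the proof. -/
structure BondFacts (N : ℕ) (bonds : List (ℕ × ℕ × BondType)) : Prop where
  lt1 : ∀ e ∈ bonds, e.1 < 4 * N
  lt2 : ∀ e ∈ bonds, e.2.1 < 4 * N
  ne : ∀ e ∈ bonds, e.1 ≠ e.2.1
  uniq : ∀ e ∈ bonds, ∀ e' ∈ bonds, e.1 = e'.1 → e.2.1 = e'.2.1 → e = e'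
  noswap : ∀ e ∈ bonds, ∀ e' ∈ bonds, e.1 = e'.2.1 → e.2.1 = e'.1 → False
  vtx : ∀ e ∈ bonds, ∀ e' ∈ bonds, e ≠ e' → e.2.2 = e'.2.2 →
    e.1 ≠ e'.1 ∧ e.1 ≠ e'.2.1 ∧ e.2.1 ≠ e'.1 ∧ e.2.1 ≠ e'.2.1
  nodup : bonds.Nodup

/-- Membership predicate of the closed ladder in arithmetic form. -/
def ClosedMem (N : ℕ) (i j : ℕ) : BondType → Prop
  | .z => i % 2 = 0 ∧ i < 4 * N ∧ j = i + 1
  | .x => (i % 2 = 1 ∧ j < 4 * N ∧ j = i + 1) ∨ (i = 4 * N - 1 ∧ j = 0)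
  | .y => (i % 2 = 0 ∧ j < 4 * N ∧ j = i + 3) ∨ (i = 4 * N - 2 ∧ j = 1)

lemma closedMem_of_mem (N : ℕ) (e : ℕ × ℕ × BondType) (he : e ∈ closedBonds N) :
    ClosedMem N e.1 e.2.1 e.2.2 := by
  obtain ⟨i, j, t⟩ := e
  simp only [closedBonds, openBonds, List.mem_append, List.mem_map, List.mem_range,
    List.mem_cons, List.not_mem_nil, or_false, Prod.mk.injEq] at he
  rcases he with ((⟨k, h, rfl, rfl, rfl⟩ | ⟨k, h, rfl, rfl, rfl⟩) | ⟨k, h, rfl, rfl, rfl⟩) |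
    ⟨rfl, rfl, rfl⟩ | ⟨rfl, rfl, rfl⟩
  all_goals (dsimp only [ClosedMem]; omega)

lemma closed_nodup (N : ℕ) : (closedBonds N).Nodup := by
  unfold closedBonds openBonds
  simp only [List.nodup_append, List.mem_append, List.mem_map, List.mem_range, List.mem_cons,
    List.not_mem_nil, or_false]
  refine ⟨⟨⟨?_, ?_, ?_⟩, ?_, ?_⟩, ?_, ?_⟩
  · exact List.nodup_range.map fun a b h => by simp at h; omega
  · exact List.nodup_range.map fun a b h => by simp at h; omega
  · rintro _ ⟨k, _, rfl⟩ _ ⟨k', _, rfl⟩; simp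
  · exact List.nodup_range.map fun a b h => by simp at h; omega
  · rintro _ (⟨k, _, rfl⟩ | ⟨k, _, rfl⟩) _ ⟨k', _, rfl⟩ <;> simp
  · simp
  · rintro _ ((⟨k, _, rfl⟩ | ⟨k, _, rfl⟩) | ⟨k, _, rfl⟩) _ (rfl | rfl) <;> simp

lemma closed_facts (N : ℕ) (hN : 2 ≤ N) : BondFacts N (closedBonds N) := by
  refine ⟨?_, ?_, ?_, ?_, ?_, ?_, closed_nodup N⟩
  · intro e he
    have := closedMem_of_mem N e he
    obtain ⟨i, j, t⟩ := e
    cases t <;> simp only [ClosedMem] at this ⊢ <;> omega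
  · intro e he
    have := closedMem_of_mem N e he
    obtain ⟨i, j, t⟩ := e
    cases t <;> simp only [ClosedMem] at this ⊢ <;> omega
  · intro e he
    have := closedMem_of_mem N e he
    obtain ⟨i, j, t⟩ := e
    cases t <;> simp only [ClosedMem] at this ⊢ <;> omega
  · intro e he e' he' h1 h2
    have h := closedMem_of_mem N e he
    have h' := closedMem_of_mem N e' he'
    obtain ⟨i, j, t⟩ := e
    obtain ⟨i', j', t'⟩ := e'
    simp only at h1 h2
    subst h1 h2
    cases t <;> cases t' <;> simp only [ClosedMem] at h h' ⊢ <;> omega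
  · intro e he e' he' h1 h2
    have h := closedMem_of_mem N e he
    have h' := closedMem_of_mem N e' he'
    obtain ⟨i, j, t⟩ := e
    obtain ⟨i', j', t'⟩ := e'
    simp only at h1 h2
    subst h1 h2
    cases t <;> cases t' <;> simp only [ClosedMem] at h h' ⊢ <;> omega
  · intro e he e' he' hne h1
    have h := closedMem_of_mem N e he
    have h' := closedMem_of_mem N e' he'
    obtain ⟨i, j, t⟩ := e
    obtain ⟨i', j', t'⟩ := e'
    simp only at h1
    subst h1
    simp only [ne_eq, Prod.mk.injEq, and_true] at hne
    cases t <;> simp only [ClosedMem] at h h' ⊢ <;> omega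

lemma BondFacts.of_sublist {N : ℕ} {l l' : List (ℕ × ℕ × BondType)} (h : BondFacts N l')
    (hs : l.Sublist l') : BondFacts N l where
  lt1 e he := h.lt1 e (hs.subset he)
  lt2 e he := h.lt2 e (hs.subset he)
  ne e he := h.ne e (hs.subset he)
  uniq e he e' he' := h.uniq e (hs.subset he) e' (hs.subset he')
  noswap e he e' he' := h.noswap e (hs.subset he) e' (hs.subset he')
  vtx e he e' he' := h.vtx e (hs.subset he) e' (hs.subset he')
  nodup := h.nodup.sublist hs

lemma bond_facts (N : ℕ) (hN : 2 ≤ N) (bonds : List (ℕ × ℕ × BondType))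
    (hbonds : bonds = openBonds N ∨ bonds = closedBonds N) : BondFacts N bonds := by
  rcases hbonds with rfl | rfl
  · exact (closed_facts N hN).of_sublist (List.sublist_append_left _ _)
  · exact closed_facts N hN

/-- `a` is an antisymmetric bond function with the same absolute values as `J`. -/
structure Adm (bonds : List (ℕ × ℕ × BondType)) (J : ℕ × ℕ → ℝ) (a : ℕ → ℕ → ℝ) : Prop where
  anti : ∀ i j, a j i = - a i j
  abs : ∀ e ∈ bonds, |a e.1 e.2.1| = |J (e.1, e.2.1)|
  zero : ∀ i j, (∀ t, (i, j, t) ∉ bonds) → (∀ t, (j, i, t) ∉ bonds) → a i j = 0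

lemma exists_adm {N : ℕ} {bonds : List (ℕ × ℕ × BondType)} (hb : BondFacts N bonds)
    (J : ℕ × ℕ → ℝ) (x : ℕ × ℕ × BondType → ℝ) (hx : ∀ e ∈ bonds, |x e| = |J (e.1, e.2.1)|) :
    ∃ a, Adm bonds J a ∧ ∀ e ∈ bonds, a e.1 e.2.1 = x e := by
  let p : ℕ → ℕ → ℝ := fun i j =>
    if h : ∃ e ∈ bonds, e.1 = i ∧ e.2.1 = j then x h.choose else 0
  have hp : ∀ e ∈ bonds, p e.1 e.2.1 = x e := by
    intro e he
    have h : ∃ e' ∈ bonds, e'.1 = e.1 ∧ e'.2.1 = e.2.1 := ⟨e, he, rfl, rfl⟩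
    simp only [p, dif_pos h]
    congr 1
    exact hb.uniq _ h.choose_spec.1 _ he h.choose_spec.2.1 h.choose_spec.2.2
  have hp0 : ∀ i j, (∀ e ∈ bonds, ¬ (e.1 = i ∧ e.2.1 = j)) → p i j = 0 := by
    intro i j h
    have : ¬ ∃ e ∈ bonds, e.1 = i ∧ e.2.1 = j := by
      rintro ⟨e, he, h'⟩; exact h e he h'
    simp only [p, dif_neg this]
  have hval : ∀ e ∈ bonds, p e.1 e.2.1 - p e.2.1 e.1 = x e := by
    intro e he
    rw [hp e he, hp0 e.2.1 e.1, sub_zero]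
    rintro e' he' ⟨h1, h2⟩
    exact hb.noswap e' he' e he h1 h2
  refine ⟨fun i j => p i j - p j i, ⟨fun i j => by ring, fun e he => ?_, fun i j h1 h2 => ?_⟩, hval⟩
  · show |p e.1 e.2.1 - p e.2.1 e.1| = _
    rw [hval e he, hx e he]
  · show p i j - p j i = 0
    rw [hp0, hp0, sub_zero]
    · rintro ⟨_, _, t⟩ he ⟨rfl, rfl⟩; exact h2 t he
    · rintro ⟨_, _, t⟩ he ⟨rfl, rfl⟩; exact h1 t he

end Bonds

section MinEig
variable {V : Type*} [NormedAddCommGroup V] [InnerProductSpace ℂ V] [FiniteDimensional ℂ V]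

lemma exists_min_eig (H : V →ₗ[ℂ] V) (hH : H.IsSymmetric) (W : Submodule ℂ V)
    (hW : ∀ v ∈ W, H v ∈ W) (hne : ∃ v ∈ W, v ≠ 0) :
    ∃ (E : ℝ) (ψ : V), ψ ∈ W ∧ ψ ≠ 0 ∧ H ψ = (E : ℂ) • ψ ∧
      ∀ (E' : ℝ) (φ : V), φ ∈ W → φ ≠ 0 → H φ = (E' : ℂ) • φ → E ≤ E' := by
  let T : Set ℝ := {t | ∃ ψ ∈ W, ψ ≠ 0 ∧ H ψ = (t : ℂ) • ψ}
  have hfin : T.Finite := by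
    have h1 : {μ : ℂ | Module.End.HasEigenvalue H μ}.Finite := Module.End.finite_hasEigenvalue H
    refine (h1.preimage (f := fun t : ℝ => (t : ℂ)) Complex.ofReal_injective.injOn).subset ?_
    rintro t ⟨ψ, _, h0, h⟩
    exact Module.End.hasEigenvalue_of_hasEigenvector
      (Module.End.hasEigenvector_iff.2 ⟨Module.End.mem_eigenspace_iff.2 h, h0⟩)
  have hnonempty : T.Nonempty := by
    obtain ⟨v, hv, hv0⟩ := hne
    have : Nontrivial W := ⟨⟨⟨v, hv⟩, 0, fun h => hv0 (congrArg Subtype.val h)⟩⟩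
    obtain ⟨μ, hμ⟩ := Module.End.exists_eigenvalue (H.restrict hW)
    obtain ⟨w, hw⟩ := hμ.exists_hasEigenvector
    have h1 : H (w : V) = μ • (w : V) := congrArg Subtype.val hw.apply_eq_smul
    have h0 : (w : V) ≠ 0 := fun h => hw.2 (Subtype.ext h)
    have hev : Module.End.HasEigenvalue H μ := Module.End.hasEigenvalue_of_hasEigenvector
      (Module.End.hasEigenvector_iff.2 ⟨Module.End.mem_eigenspace_iff.2 h1, h0⟩)
    have hr := hH.conj_eigenvalue_eq_self hev
    obtain ⟨r, hr⟩ := Complex.conj_eq_iff_real.1 hr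
    exact ⟨r, w, w.2, h0, by rw [h1, hr]⟩
  obtain ⟨E, ⟨ψ, hψ, h0, h⟩, hE⟩ := hfin.exists_minimal hnonempty
  refine ⟨E, ψ, hψ, h0, h, fun E' φ h1 h2 h3 => ?_⟩
  by_contra hlt
  exact hlt (hE ⟨φ, h1, h2, h3⟩ (not_le.1 hlt).le)

lemma leastEig_eq (H : V →ₗ[ℂ] V) (E : ℝ) (ψ : V) (h0 : ψ ≠ 0) (h : H ψ = (E : ℂ) • ψ)
    (hmin : ∀ (E' : ℝ) (φ : V), φ ≠ 0 → H φ = (E' : ℂ) • φ → E ≤ E') : leastEig H = E := by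
  have : IsLeast {t : ℝ | Module.End.HasEigenvalue H (t : ℂ)} E := by
    constructor
    · exact Module.End.hasEigenvalue_of_hasEigenvector
        (Module.End.hasEigenvector_iff.2 ⟨Module.End.mem_eigenspace_iff.2 h, h0⟩)
    · intro t ht
      obtain ⟨w, hw⟩ := Module.End.HasEigenvalue.exists_hasEigenvector ht
      exact hmin t w hw.2 hw.apply_eq_smul
  exact this.csInf_eq

end MinEig

section Sectors
variable {V : Type*} [NormedAddCommGroup V] [InnerProductSpace ℂ V] [FiniteDimensional ℂ V]

/-- Unfolded Clifford relations of the ladder generators. -/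
structure GenFacts (N : ℕ) (b : ℕ → BondType → (V →ₗ[ℂ] V)) (c : ℕ → (V →ₗ[ℂ] V)) : Prop where
  sq : ∀ k < 4 * N, ∀ o, ladderGen b c (k, o) * ladderGen b c (k, o) = 1
  ac : ∀ k < 4 * N, ∀ k' < 4 * N, ∀ o o', (k, o) ≠ (k', o') →
    ladderGen b c (k, o) * ladderGen b c (k', o') =
      -(ladderGen b c (k', o') * ladderGen b c (k, o))
  sa : ∀ k < 4 * N, ∀ o, IsSelfAdjoint (ladderGen b c (k, o))

lemma gen_facts {N : ℕ} {b : ℕ → BondType → (V →ₗ[ℂ] V)} {c : ℕ → (V →ₗ[ℂ] V)}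
    (h : IsLadderMajorana N b c) : GenFacts N b c := by
  obtain ⟨h1, h2⟩ := h
  refine ⟨fun k hk o => ?_, fun k hk k' hk' o o' hne => ?_, fun k hk o => h1 (⟨k, hk⟩, o)⟩
  · have := h2 (⟨k, hk⟩, o) (⟨k, hk⟩, o)
    rw [if_pos rfl, ← two_smul ℂ] at this
    exact smul_right_injective _ (two_ne_zero' ℂ) this
  · have := h2 (⟨k, hk⟩, o) (⟨k', hk'⟩, o')
    rw [if_neg (by simpa [Prod.ext_iff, Fin.ext_iff] using hne)] at this
    exact eq_neg_of_add_eq_zero_left this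

variable {N : ℕ} {b : ℕ → BondType → (V →ₗ[ℂ] V)} {c : ℕ → (V →ₗ[ℂ] V)}
  {bonds : List (ℕ × ℕ × BondType)}

lemma prod_commute {R : Type*} [Ring R] {x y z : R} (h1 : x * z = -(z * x))
    (h2 : y * z = -(z * y)) : x * y * z = z * (x * y) := by
  rw [mul_assoc, h2, mul_neg, ← mul_assoc, h1, neg_mul, neg_neg, mul_assoc]

lemma u_commute_gen (hg : GenFacts N b c) (hb : BondFacts N bonds) (e : ℕ × ℕ × BondType)
    (he : e ∈ bonds) (k : ℕ) (hk : k < 4 * N) (o : Option BondType)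
    (h1 : (e.1, some e.2.2) ≠ (k, o)) (h2 : (e.2.1, some e.2.2) ≠ (k, o)) :
    uOp b e * ladderGen b c (k, o) = ladderGen b c (k, o) * uOp b e := by
  have a1 := hg.ac e.1 (hb.lt1 e he) k hk _ _ h1
  have a2 := hg.ac e.2.1 (hb.lt2 e he) k hk _ _ h2
  have := prod_commute a1 a2
  rw [uOp, smul_mul_assoc, mul_smul_comm]
  congr 1

lemma u_commute_c (hg : GenFacts N b c) (hb : BondFacts N bonds) (e : ℕ × ℕ × BondType)
    (he : e ∈ bonds) (k : ℕ) (hk : k < 4 * N) : uOp b e * c k = c k * uOp b e :=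
  u_commute_gen hg hb e he k hk none (by simp) (by simp)

lemma u_commute_b (hg : GenFacts N b c) (hb : BondFacts N bonds) (e e' : ℕ × ℕ × BondType)
    (he : e ∈ bonds) (he' : e' ∈ bonds) (hne : e ≠ e') :
    uOp b e * b e'.1 e'.2.2 = b e'.1 e'.2.2 * uOp b e := by
  refine u_commute_gen hg hb e he e'.1 (hb.lt1 e' he') (some e'.2.2) ?_ ?_
  · intro h
    simp only [Prod.mk.injEq, Option.some.injEq] at h
    exact (hb.vtx e he e' he' hne h.2).1 h.1
  · intro h
    simp only [Prod.mk.injEq, Option.some.injEq] at h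
    exact (hb.vtx e he e' he' hne h.2).2.2.1 h.1

lemma u_commute_b' (hg : GenFacts N b c) (hb : BondFacts N bonds) (e e' : ℕ × ℕ × BondType)
    (he : e ∈ bonds) (he' : e' ∈ bonds) (hne : e ≠ e') :
    uOp b e * b e'.2.1 e'.2.2 = b e'.2.1 e'.2.2 * uOp b e := by
  refine u_commute_gen hg hb e he e'.2.1 (hb.lt2 e' he') (some e'.2.2) ?_ ?_
  · intro h
    simp only [Prod.mk.injEq, Option.some.injEq] at h
    exact (hb.vtx e he e' he' hne h.2).2.1 h.1
  · intro h
    simp only [Prod.mk.injEq, Option.some.injEq] at h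
    exact (hb.vtx e he e' he' hne h.2).2.2.2 h.1

lemma u_commute_u (hg : GenFacts N b c) (hb : BondFacts N bonds) (e e' : ℕ × ℕ × BondType)
    (he : e ∈ bonds) (he' : e' ∈ bonds) : Commute (uOp b e) (uOp b e') := by
  by_cases h : e = e'
  · rw [h]
  · have h1 : Commute (uOp b e) (b e'.1 e'.2.2) := u_commute_b hg hb e e' he he' h
    have h2 : Commute (uOp b e) (b e'.2.1 e'.2.2) := u_commute_b' hg hb e e' he he' h
    exact (h1.mul_right h2).smul_right _

lemma b_anti (hg : GenFacts N b c) (hb : BondFacts N bonds) (e : ℕ × ℕ × BondType)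
    (he : e ∈ bonds) :
    b e.1 e.2.2 * b e.2.1 e.2.2 = - (b e.2.1 e.2.2 * b e.1 e.2.2) :=
  hg.ac e.1 (hb.lt1 e he) e.2.1 (hb.lt2 e he) (some e.2.2) (some e.2.2)
    (by simpa using hb.ne e he)

lemma c_anti (hg : GenFacts N b c) (i j : ℕ) (hi : i < 4 * N) (hj : j < 4 * N) (h : i ≠ j) :
    c i * c j = - (c j * c i) :=
  hg.ac i hi j hj none none (by simpa using h)

lemma c_sq (hg : GenFacts N b c) (i : ℕ) (hi : i < 4 * N) : c i * c i = 1 :=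
  hg.sq i hi none

lemma b_sq (hg : GenFacts N b c) (i : ℕ) (hi : i < 4 * N) (t : BondType) : b i t * b i t = 1 :=
  hg.sq i hi (some t)

lemma u_sq (hg : GenFacts N b c) (hb : BondFacts N bonds) (e : ℕ × ℕ × BondType)
    (he : e ∈ bonds) : uOp b e * uOp b e = 1 := by
  have h1 := b_anti hg hb e he
  have h2 := b_sq hg e.1 (hb.lt1 e he) e.2.2
  have h3 := b_sq hg e.2.1 (hb.lt2 e he) e.2.2
  rw [uOp, smul_mul_assoc, mul_smul_comm, smul_smul, Complex.I_mul_I]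
  have : b e.1 e.2.2 * b e.2.1 e.2.2 * (b e.1 e.2.2 * b e.2.1 e.2.2) = -1 := by
    calc _ = b e.1 e.2.2 * b e.2.1 e.2.2 * (-(b e.2.1 e.2.2 * b e.1 e.2.2)) := by rw [← h1]
      _ = -(b e.1 e.2.2 * (b e.2.1 e.2.2 * b e.2.1 e.2.2) * b e.1 e.2.2) := by
        simp only [mul_neg, mul_assoc]
      _ = -1 := by rw [h3, mul_one, h2]
  rw [this]; simp

lemma u_anti_b (hg : GenFacts N b c) (hb : BondFacts N bonds) (e : ℕ × ℕ × BondType)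
    (he : e ∈ bonds) : uOp b e * b e.1 e.2.2 = - (b e.1 e.2.2 * uOp b e) := by
  have h1 := b_anti hg hb e he
  rw [uOp, smul_mul_assoc, mul_smul_comm, ← smul_neg]
  congr 1
  rw [mul_assoc, ← mul_neg]
  congr 1
  rw [h1, neg_neg]

lemma u_selfadj (hg : GenFacts N b c) (hb : BondFacts N bonds) (e : ℕ × ℕ × BondType)
    (he : e ∈ bonds) : IsSelfAdjoint (uOp b e) := by
  have h1 : star (b e.1 e.2.2) = b e.1 e.2.2 := hg.sa e.1 (hb.lt1 e he) (some e.2.2)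
  have h2 : star (b e.2.1 e.2.2) = b e.2.1 e.2.2 := hg.sa e.2.1 (hb.lt2 e he) (some e.2.2)
  rw [IsSelfAdjoint, uOp, star_smul, star_mul, h1, h2, b_anti hg hb e he]
  simp

lemma cc_selfadj (hg : GenFacts N b c) (i j : ℕ) (hi : i < 4 * N) (hj : j < 4 * N) (h : i ≠ j) :
    IsSelfAdjoint (Complex.I • (c i * c j)) := by
  have h1 : star (c i) = c i := hg.sa i hi none
  have h2 : star (c j) = c j := hg.sa j hj none
  rw [IsSelfAdjoint, star_smul, star_mul, h1, h2, c_anti hg i j hi hj h]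
  simp

lemma u_commute_cc (hg : GenFacts N b c) (hb : BondFacts N bonds) (e : ℕ × ℕ × BondType)
    (he : e ∈ bonds) (i j : ℕ) (hi : i < 4 * N) (hj : j < 4 * N) :
    Commute (uOp b e) (Complex.I • (c i * c j)) := by
  have h1 : Commute (uOp b e) (c i) := u_commute_c hg hb e he i hi
  have h2 : Commute (uOp b e) (c j) := u_commute_c hg hb e he j hj
  exact (h1.mul_right h2).smul_right _

lemma H_selfadj (hg : GenFacts N b c) (hb : BondFacts N bonds) (J : ℕ × ℕ → ℝ) :
    IsSelfAdjoint (fermH J b c bonds) := by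
  have : ∀ l : List (ℕ × ℕ × BondType), (∀ e ∈ l, e ∈ bonds) →
      IsSelfAdjoint (l.map (bondTerm J b c)).sum := by
    intro l
    induction l with
    | nil => intro _; simp
    | cons e l ih =>
      intro h
      rw [List.map_cons, List.sum_cons]
      refine IsSelfAdjoint.add ?_ (ih fun e' h' => h e' (List.mem_cons_of_mem _ h'))
      have he := h e List.mem_cons_self
      have h1 := u_selfadj hg hb e he
      have h2 := cc_selfadj hg e.1 e.2.1 (hb.lt1 e he) (hb.lt2 e he) (hb.ne e he)
      have h3 := u_commute_cc hg hb e he e.1 e.2.1 (hb.lt1 e he) (hb.lt2 e he)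
      have h4 := (h1.commute_iff h2).1 h3
      refine IsSelfAdjoint.smul ?_ h4
      exact Complex.conj_ofReal _
  exact this bonds fun _ h => h

lemma H_commute_u (hg : GenFacts N b c) (hb : BondFacts N bonds) (J : ℕ × ℕ → ℝ)
    (e : ℕ × ℕ × BondType) (he : e ∈ bonds) : Commute (uOp b e) (fermH J b c bonds) := by
  have : ∀ l : List (ℕ × ℕ × BondType), (∀ e ∈ l, e ∈ bonds) →
      Commute (uOp b e) (l.map (bondTerm J b c)).sum := by
    intro l
    induction l with
    | nil => intro _; simp
    | cons e' l ih =>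
      intro h
      rw [List.map_cons, List.sum_cons]
      refine Commute.add_right ?_ (ih fun e' h' => h e' (List.mem_cons_of_mem _ h'))
      have he' := h e' List.mem_cons_self
      exact ((u_commute_u hg hb e e' he he').mul_right
        (u_commute_cc hg hb e he e'.1 e'.2.1 (hb.lt1 e' he') (hb.lt2 e' he'))).smul_right _
  exact this bonds fun _ h => h

/-- The sector of vectors on which `J_e u_e` acts as `a_e`. -/
def sector (b : ℕ → BondType → (V →ₗ[ℂ] V)) (J : ℕ × ℕ → ℝ) (a : ℕ → ℕ → ℝ)
    (bonds : List (ℕ × ℕ × BondType)) : Submodule ℂ V where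
  carrier := {ψ | ∀ e ∈ bonds, (J (e.1, e.2.1) : ℂ) • uOp b e ψ = (a e.1 e.2.1 : ℂ) • ψ}
  add_mem' := by
    intro x y hx hy e he
    rw [map_add, smul_add, smul_add, hx e he, hy e he]
  zero_mem' := by intro e he; simp
  smul_mem' := by
    intro r x hx e he
    rw [map_smul, smul_comm, hx e he, smul_comm]

lemma c_sector (hg : GenFacts N b c) (hb : BondFacts N bonds) (J : ℕ × ℕ → ℝ) (a : ℕ → ℕ → ℝ)
    (k : ℕ) (hk : k < 4 * N) (ψ : V) (hψ : ψ ∈ sector b J a bonds) :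
    c k ψ ∈ sector b J a bonds := by
  intro e he
  have := congrArg (fun f : V →ₗ[ℂ] V => f ψ) (u_commute_c hg hb e he k hk)
  simp only [Module.End.mul_apply] at this
  rw [this, ← map_smul, hψ e he, map_smul]

lemma sector_nonempty [Nontrivial V] (hg : GenFacts N b c) (hb : BondFacts N bonds)
    (J : ℕ × ℕ → ℝ) (a : ℕ → ℕ → ℝ) (ha : Adm bonds J a) :
    ∃ ψ ∈ sector b J a bonds, ψ ≠ 0 := by
  have : ∀ l : List (ℕ × ℕ × BondType), (∀ e ∈ l, e ∈ bonds) → l.Nodup →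
      ∃ ψ ∈ sector b J a l, ψ ≠ 0 := by
    intro l
    induction l with
    | nil =>
      intro _ _
      obtain ⟨ψ, hψ⟩ := exists_ne (0 : V)
      exact ⟨ψ, by intro e he; simp at he, hψ⟩
    | cons e l ih =>
      intro h hnd
      rw [List.nodup_cons] at hnd
      obtain ⟨ψ, hψ, h0⟩ := ih (fun e' h' => h e' (List.mem_cons_of_mem _ h')) hnd.2
      have he := h e List.mem_cons_self
      have hl : ∀ e' ∈ l, e' ∈ bonds := fun e' h' => h e' (List.mem_cons_of_mem _ h')
      have husq : uOp b e (uOp b e ψ) = ψ := by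
        have := congrArg (fun f : V →ₗ[ℂ] V => f ψ) (u_sq hg hb e he)
        simpa using this
      obtain ⟨σ, hσ, hs⟩ : ∃ σ : ℂ, σ * σ = 1 ∧ (a e.1 e.2.1 : ℂ) = J (e.1, e.2.1) * σ := by
        rcases abs_eq_abs.1 (ha.abs e he) with h | h
        · exact ⟨1, by simp, by simp [h]⟩
        · exact ⟨-1, by simp, by simp [h]⟩
      suffices hh : ∃ φ ∈ sector b J a l, φ ≠ 0 ∧ uOp b e φ = σ • φ by
        obtain ⟨φ, h1, h2, h3⟩ := hh
        refine ⟨φ, ?_, h2⟩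
        intro e' he'
        rcases List.mem_cons.1 he' with rfl | he'
        · rw [h3, hs, smul_smul]
        · exact h1 e' he'
      by_cases hz : ψ + σ • uOp b e ψ = 0
      · have hu : uOp b e ψ = - σ • ψ := by
          have h1 : σ • (ψ + σ • uOp b e ψ) = 0 := by rw [hz, smul_zero]
          rw [smul_add, smul_smul, hσ, one_smul] at h1
          rw [neg_smul]; exact eq_neg_of_add_eq_zero_right h1
        refine ⟨b e.1 e.2.2 ψ, ?_, ?_, ?_⟩
        · intro e' he'
          have hne : e' ≠ e := fun h => hnd.1 (h ▸ he')
          have := congrArg (fun f : V →ₗ[ℂ] V => f ψ) (u_commute_b hg hb e' e (hl e' he') he hne)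
          simp only [Module.End.mul_apply] at this
          rw [this, ← map_smul, hψ e' he', map_smul]
        · intro h
          have := congrArg (fun f : V →ₗ[ℂ] V => f ψ) (b_sq hg e.1 (hb.lt1 e he) e.2.2)
          simp only [Module.End.mul_apply, h, map_zero, Module.End.one_apply] at this
          exact h0 this.symm
        · have := congrArg (fun f : V →ₗ[ℂ] V => f ψ) (u_anti_b hg hb e he)
          simp only [Module.End.mul_apply, LinearMap.neg_apply, hu, map_smul] at this
          rw [this]; simp
      · refine ⟨_, ?_, hz, ?_⟩
        · refine Submodule.add_mem _ hψ (Submodule.smul_mem _ _ ?_)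
          intro e' he'
          have := congrArg (fun f : V →ₗ[ℂ] V => f ψ) (u_commute_u hg hb e' e (hl e' he') he).eq
          simp only [Module.End.mul_apply] at this
          rw [this, ← map_smul, hψ e' he', map_smul]
        · rw [map_add, map_smul, husq, smul_add, smul_smul, hσ, one_smul, add_comm]
  exact this bonds (fun _ h => h) hb.nodup

lemma exists_joint (hg : GenFacts N b c) (hb : BondFacts N bonds) (J : ℕ × ℕ → ℝ) (E : ℂ) (ψ : V)
    (h0 : ψ ≠ 0) (hE : fermH J b c bonds ψ = E • ψ) :
    ∃ a, Adm bonds J a ∧ ∃ φ ∈ sector b J a bonds, φ ≠ 0 ∧ fermH J b c bonds φ = E • φ := by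
  have : ∀ l : List (ℕ × ℕ × BondType), (∀ e ∈ l, e ∈ bonds) →
      ∃ φ : V, φ ≠ 0 ∧ fermH J b c bonds φ = E • φ ∧
        ∀ e ∈ l, ∃ σ : ℝ, |σ| = 1 ∧ uOp b e φ = (σ : ℂ) • φ := by
    intro l
    induction l with
    | nil => intro _; exact ⟨ψ, h0, hE, by simp⟩
    | cons e l ih =>
      intro h
      have he := h e List.mem_cons_self
      have hl : ∀ e' ∈ l, e' ∈ bonds := fun e' h' => h e' (List.mem_cons_of_mem _ h')
      obtain ⟨φ, h1, h2, h3⟩ := ih hl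
      have husq : uOp b e (uOp b e φ) = φ := by
        have := congrArg (fun f : V →ₗ[ℂ] V => f φ) (u_sq hg hb e he)
        simpa using this
      by_cases hz : φ + uOp b e φ = 0
      · refine ⟨φ, h1, h2, ?_⟩
        intro e' he'
        rcases List.mem_cons.1 he' with rfl | he'
        · exact ⟨-1, by simp, by rw [eq_neg_of_add_eq_zero_right hz]; simp⟩
        · exact h3 e' he'
      · refine ⟨_, hz, ?_, ?_⟩
        · have := congrArg (fun f : V →ₗ[ℂ] V => f φ) (H_commute_u hg hb J e he).eq
          simp only [Module.End.mul_apply] at this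
          rw [map_add, ← this, h2, map_smul, smul_add]
        · intro e' he'
          rcases List.mem_cons.1 he' with rfl | he'
          · exact ⟨1, by simp, by rw [map_add, husq, add_comm]; simp⟩
          · obtain ⟨σ, hs, hσ⟩ := h3 e' he'
            refine ⟨σ, hs, ?_⟩
            have := congrArg (fun f : V →ₗ[ℂ] V => f φ) (u_commute_u hg hb e' e (hl e' he') he).eq
            simp only [Module.End.mul_apply] at this
            rw [map_add, this, hσ, map_smul, smul_add]
  obtain ⟨φ, h1, h2, h3⟩ := this bonds fun _ h => h
  choose! σ hs hσ using h3
  obtain ⟨a, ha, hae⟩ := exists_adm hb J (fun e => J (e.1, e.2.1) * σ e)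
    (fun e he => by rw [abs_mul, hs e he, mul_one])
  refine ⟨a, ha, φ, ?_, h1, h2⟩
  intro e he
  rw [hσ e he, hae e he, smul_smul]
  push_cast; rfl

lemma sum_bonds (hb : BondFacts N bonds) (J : ℕ × ℕ → ℝ)
    (a : ℕ → ℕ → ℝ) (ha : Adm bonds J a) (F : ℕ → ℕ → V)
    (hF : ∀ i < 4 * N, ∀ j < 4 * N, i ≠ j → F i j = - F j i) :
    (bonds.map fun e => (a e.1 e.2.1 : ℂ) • F e.1 e.2.1).sum =
      ∑ i ∈ Finset.range (4 * N), ∑ j ∈ Finset.range (4 * N),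
        ((1 / 2 : ℂ) * a i j) • F i j := by
  let G : ℕ × ℕ → V := fun p => ((1 / 2 : ℂ) * a p.1 p.2) • F p.1 p.2
  have hnd : (bonds.map fun e => (e.1, e.2.1)).Nodup := by
    refine hb.nodup.map_on ?_
    intro e he e' he' h
    simp only [Prod.mk.injEq] at h
    exact hb.uniq e he e' he' h.1 h.2
  let P : Finset (ℕ × ℕ) := (bonds.map fun e => (e.1, e.2.1)).toFinset
  have hP : ∀ p, p ∈ P ↔ ∃ e ∈ bonds, (e.1, e.2.1) = p := by
    intro p; simp [P]
  have hdisj : Disjoint P (P.map (Equiv.prodComm ℕ ℕ).toEmbedding) := by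
    rw [Finset.disjoint_left]
    intro p hp hp'
    rw [Finset.mem_map] at hp'
    obtain ⟨q, hq, rfl⟩ := hp'
    obtain ⟨e, he, h⟩ := (hP _).1 hp
    obtain ⟨e', he', rfl⟩ := (hP _).1 hq
    simp at h
    exact hb.noswap e he e' he' h.1 h.2
  have hsub : P.disjUnion _ hdisj ⊆ Finset.range (4 * N) ×ˢ Finset.range (4 * N) := by
    intro p hp
    rw [Finset.mem_disjUnion, Finset.mem_map] at hp
    rw [Finset.mem_product, Finset.mem_range, Finset.mem_range]
    rcases hp with hp | ⟨q, hp, rfl⟩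
    · obtain ⟨e, he, rfl⟩ := (hP _).1 hp
      exact ⟨hb.lt1 e he, hb.lt2 e he⟩
    · obtain ⟨e, he, rfl⟩ := (hP _).1 hp
      exact ⟨hb.lt2 e he, hb.lt1 e he⟩
  rw [← Finset.sum_product', ← Finset.sum_subset hsub, Finset.sum_disjUnion, Finset.sum_map]
  · have hl : ∀ f : ℕ × ℕ → V, (bonds.map fun e => f (e.1, e.2.1)).sum = ∑ p ∈ P, f p := by
      intro f
      rw [List.sum_toFinset _ hnd, List.map_map]
      rfl
    rw [hl fun p => (a p.1 p.2 : ℂ) • F p.1 p.2, ← Finset.sum_add_distrib]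
    refine Finset.sum_congr rfl fun p hp => ?_
    obtain ⟨e, he, rfl⟩ := (hP _).1 hp
    simp only [Equiv.coe_toEmbedding, Equiv.prodComm_apply, Prod.swap_prod_mk]
    rw [hF e.2.1 (hb.lt2 e he) e.1 (hb.lt1 e he) (hb.ne e he).symm, ha.anti e.1 e.2.1]
    push_cast
    module
  · intro p _ hp
    have : a p.1 p.2 = 0 := by
      apply ha.zero
      · intro t ht
        exact hp (Finset.mem_disjUnion.2 (Or.inl ((hP _).2 ⟨_, ht, rfl⟩)))
      · intro t ht
        exact hp (Finset.mem_disjUnion.2 (Or.inr (Finset.mem_map.2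
          ⟨(p.2, p.1), (hP _).2 ⟨_, ht, rfl⟩, rfl⟩)))
    rw [this]; simp

lemma H_on_sector (hg : GenFacts N b c) (hb : BondFacts N bonds) (J : ℕ × ℕ → ℝ)
    (a : ℕ → ℕ → ℝ) (ha : Adm bonds J a) (ψ : V) (hψ : ψ ∈ sector b J a bonds) :
    fermH J b c bonds ψ = ∑ i ∈ Finset.range (4 * N), ∑ j ∈ Finset.range (4 * N),
        ((1 / 2 : ℂ) * a i j) • (Complex.I • c i (c j ψ)) := by
  rw [← sum_bonds hb J a ha (fun i j => Complex.I • c i (c j ψ))]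
  · have : ∀ l : List (ℕ × ℕ × BondType), (∀ e ∈ l, e ∈ bonds) →
      (l.map (bondTerm J b c)).sum ψ =
        (l.map fun e => (a e.1 e.2.1 : ℂ) • (Complex.I • c e.1 (c e.2.1 ψ))).sum := by
      intro l
      induction l with
      | nil => intro _; simp
      | cons e l ih =>
        intro h
        have he := h e List.mem_cons_self
        rw [List.map_cons, List.sum_cons, List.map_cons, List.sum_cons, LinearMap.add_apply,
          ih fun e' h' => h e' (List.mem_cons_of_mem _ h')]
        congr 1
        have hm : Complex.I • c e.1 (c e.2.1 ψ) ∈ sector b J a bonds :=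
          Submodule.smul_mem _ _ (c_sector hg hb J a _ (hb.lt1 e he) _
            (c_sector hg hb J a _ (hb.lt2 e he) _ hψ))
        exact hm e he
    exact this bonds fun _ h => h
  · intro i hi j hj hij
    have := congrArg (fun f : V →ₗ[ℂ] V => f ψ) (c_anti hg i j hi hj hij)
    simp only [Module.End.mul_apply, LinearMap.neg_apply] at this
    rw [this, smul_neg]

end Sectors

section Final
variable {V : Type*} [NormedAddCommGroup V] [InnerProductSpace ℂ V] [FiniteDimensional ℂ V]
  {N : ℕ} {b : ℕ → BondType → (V →ₗ[ℂ] V)} {c : ℕ → (V →ₗ[ℂ] V)}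
  {bonds : List (ℕ × ℕ × BondType)}

/-- The Hermitian one-particle matrix of a sector in a (gauged, reindexed) basis. -/
def Kmat {n : Type*} (f : n → ℕ) (s : n → ℝ) (a : ℕ → ℕ → ℝ) : Matrix n n ℂ :=
  Matrix.of fun p q => Complex.I * ((s p * s q * a (f p) (f q) : ℝ) : ℂ)

lemma Kmat_herm {n : Type*} (f : n → ℕ) (s : n → ℝ) (a : ℕ → ℕ → ℝ)
    (ha : ∀ i j, a j i = - a i j) : (Kmat f s a).IsHermitian := by
  ext p q
  simp only [Kmat, Matrix.conjTranspose_apply, Matrix.of_apply, star_mul', Complex.star_def,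
    Complex.conj_I, Complex.conj_ofReal]
  rw [ha (f p) (f q)]; push_cast; ring

lemma energy_sector (hg : GenFacts N b c) (hb : BondFacts N bonds) (J : ℕ × ℕ → ℝ)
    (a : ℕ → ℕ → ℝ) (ha : Adm bonds J a) {n : Type*} [Fintype n] [DecidableEq n]
    (f : n → ℕ) (hf : Function.Injective f) (hfr : Finset.univ.image f = Finset.range (4 * N))
    (s : n → ℝ) (hs : ∀ p, s p * s p = 1) (t : ℝ) (ht : HasTr (Kmat f s a) t)
    (ψ : V) (hψ : ψ ∈ sector b J a bonds) (h0 : ψ ≠ 0) (E : ℝ)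
    (hE : fermH J b c bonds ψ = (E : ℂ) • ψ)
    (hmin : ∀ (E' : ℝ) (φ : V), φ ∈ sector b J a bonds → φ ≠ 0 →
      fermH J b c bonds φ = (E' : ℂ) • φ → E ≤ E') : E = - t / 2 := by
  have hlt : ∀ p, f p < 4 * N := fun p => by
    rw [← Finset.mem_range, ← hfr]; exact Finset.mem_image_of_mem _ (Finset.mem_univ _)
  let c' : n → (V →ₗ[ℂ] V) := fun p => (s p : ℂ) • c (f p)
  have hsC : ∀ p, (s p : ℂ) * s p = 1 := fun p => by exact_mod_cast hs p
  have hQ : ∀ φ ∈ sector b J a bonds, fermH J b c bonds φ = quadOp c' (Kmat f s a) φ := by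
    intro φ hφ
    rw [H_on_sector hg hb J a ha φ hφ, ← hfr, Finset.sum_image hf.injOn]
    simp only [Finset.sum_image hf.injOn]
    simp only [quadOp, LinearMap.smul_apply, LinearMap.sum_apply, Finset.smul_sum, c',
      Module.End.mul_apply, map_smul, smul_smul, Kmat, Matrix.of_apply]
    refine Finset.sum_congr rfl fun p _ => Finset.sum_congr rfl fun q _ => ?_
    congr 1
    push_cast
    linear_combination (-(1 / 2 : ℂ) * a (f p) (f q) * Complex.I * (s p * s p)) * hsC q
      - ((1 / 2 : ℂ) * a (f p) (f q) * Complex.I) * hsC p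
  refine energy_formula c' ?_ (Kmat f s a) ?_ t ht ψ h0 E (by rw [← hQ ψ hψ, hE]) ?_
  · intro p q
    simp only [c', smul_mul_assoc, mul_smul_comm, smul_smul]
    split_ifs with h
    · subst h
      rw [hsC, c_sq hg _ (hlt p), one_smul, two_smul]
    · rw [c_anti hg _ _ (hlt p) (hlt q) (fun h' => h (hf h')), mul_comm]
      simp
  · intro p q
    simp only [Kmat, Matrix.of_apply]
    rw [ha.anti (f p) (f q)]; push_cast; ring
  · intro w E' hlt' hE'
    by_contra hne
    have hm : cw c' w ψ ∈ sector b J a bonds := by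
      simp only [cw, LinearMap.sum_apply, LinearMap.smul_apply, c']
      exact Submodule.sum_mem _ fun p _ => Submodule.smul_mem _ _ (Submodule.smul_mem _ _
        (c_sector hg hb J a _ (hlt p) _ hψ))
    have := hmin E' _ hm hne (by rw [hQ _ hm, hE'])
    linarith

lemma sector_min [Nontrivial V] (hg : GenFacts N b c) (hb : BondFacts N bonds) (J : ℕ × ℕ → ℝ)
    (a : ℕ → ℕ → ℝ) (ha : Adm bonds J a) :
    ∃ (E : ℝ) (ψ : V), ψ ∈ sector b J a bonds ∧ ψ ≠ 0 ∧ fermH J b c bonds ψ = (E : ℂ) • ψ ∧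
      ∀ (E' : ℝ) (φ : V), φ ∈ sector b J a bonds → φ ≠ 0 →
        fermH J b c bonds φ = (E' : ℂ) • φ → E ≤ E' := by
  refine exists_min_eig _ ((LinearMap.isSymmetric_iff_isSelfAdjoint _).2 (H_selfadj hg hb J)) _ ?_
    (sector_nonempty hg hb J a ha)
  intro v hv e he
  have := congrArg (fun f : V →ₗ[ℂ] V => f v) (H_commute_u hg hb J e he).eq
  simp only [Module.End.mul_apply] at this
  rw [this, ← map_smul, hv e he, map_smul]

/-- Reflected bond function: on `Λ × Λ` it is replaced by minus the mirror image. -/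
def reflA (θ : ℕ → ℕ) (Λ : Finset ℕ) (s : ℕ → ℝ) (a : ℕ → ℕ → ℝ) (i j : ℕ) : ℝ :=
  if i ∈ Λ ∧ j ∈ Λ then -(s i * s j * a (θ i) (θ j)) else a i j

lemma adm_val {J : ℕ × ℕ → ℝ} {a : ℕ → ℕ → ℝ} (ha : Adm bonds J a)
    (hJ : ∀ i j, J (i, j) = J (j, i)) (i j : ℕ) (t : BondType)
    (h : (i, j, t) ∈ bonds ∨ (j, i, t) ∈ bonds) : |a i j| = |J (i, j)| := by
  rcases h with h | h
  · exact ha.abs _ h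
  · rw [hJ, ha.anti j i, abs_neg]; exact ha.abs _ h

lemma reflA_adm (hb : BondFacts N bonds) (R : LadderReflection N bonds) {J : ℕ × ℕ → ℝ}
    {a : ℕ → ℕ → ℝ} (ha : Adm bonds J a) (hJ : ∀ i j, J (i, j) = J (j, i))
    (hJrefl : ∀ e ∈ bonds, |J (R.θ e.1, R.θ e.2.1)| = |J (e.1, e.2.1)|)
    (Λ : Finset ℕ) (hΛ : ∀ i ∈ Λ, i < 4 * N) (s : ℕ → ℝ) (hs : ∀ i, |s i| = 1) :
    Adm bonds J (reflA R.θ Λ s a) := by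
  refine ⟨?_, ?_, ?_⟩
  · intro i j
    simp only [reflA, and_comm (a := i ∈ Λ)]
    split_ifs
    · rw [ha.anti (R.θ i) (R.θ j)]; ring
    · exact ha.anti i j
  · intro e he
    simp only [reflA]
    split_ifs
    · rw [abs_neg, abs_mul, abs_mul, hs, hs, one_mul, one_mul,
        adm_val ha hJ _ _ e.2.2 (R.mapsB e he), hJrefl e he]
    · exact ha.abs e he
  · intro i j h1 h2
    simp only [reflA]
    split_ifs with h
    · have hi := R.invol i (hΛ i h.1)
      have hj := R.invol j (hΛ j h.2)
      rw [ha.zero, mul_zero, neg_zero]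
      · intro t ht
        rcases R.mapsB _ ht with h' | h' <;> simp only [hi, hj] at h'
        · exact h1 t h'
        · exact h2 t h'
      · intro t ht
        rcases R.mapsB _ ht with h' | h' <;> simp only [hi, hj] at h'
        · exact h2 t h'
        · exact h1 t h'
    · exact ha.zero i j h1 h2

/-- Gauge signs making the crossing couplings nonnegative. -/
def gaugeS (R : LadderReflection N bonds) (a : ℕ → ℕ → ℝ) (i : ℕ) : ℝ :=
  if i ∈ R.Λm then (if a i (R.θ i) < 0 then -1 else 1) else (if a (R.θ i) i < 0 then -1 else 1)

lemma gaugeS_abs (R : LadderReflection N bonds) (a : ℕ → ℕ → ℝ) (i : ℕ) :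
    |gaugeS R a i| = 1 := by
  unfold gaugeS; split_ifs <;> simp

lemma gaugeS_sq (R : LadderReflection N bonds) (a : ℕ → ℕ → ℝ) (i : ℕ) :
    gaugeS R a i * gaugeS R a i = 1 := by
  unfold gaugeS; split_ifs <;> simp

lemma refl_lt_m (R : LadderReflection N bonds) (i : ℕ) (h : i ∈ R.Λm) : i < 4 * N := by
  rw [← Finset.mem_range, ← R.union]; exact Finset.mem_union_left _ h

lemma refl_lt_p (R : LadderReflection N bonds) (i : ℕ) (h : i ∈ R.Λp) : i < 4 * N := by
  rw [← Finset.mem_range, ← R.union]; exact Finset.mem_union_right _ h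

lemma refl_not (R : LadderReflection N bonds) (i : ℕ) (h : i ∈ R.Λp) : i ∉ R.Λm :=
  fun h' => Finset.disjoint_left.1 R.disj h' h

lemma gaugeS_theta (R : LadderReflection N bonds) (a : ℕ → ℕ → ℝ) (i : ℕ) (hi : i < 4 * N) :
    gaugeS R a (R.θ i) = gaugeS R a i := by
  have h := hi
  rw [← Finset.mem_range, ← R.union, Finset.mem_union] at h
  rcases h with h | h
  · have h' := refl_not R _ (R.swap_m i h)
    simp only [gaugeS, h, h', if_true, if_false, R.invol i hi]
  · have h' := R.swap_p i h
    simp only [gaugeS, refl_not R i h, h', if_true, if_false, R.invol i hi]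

lemma gaugeS_m (R : LadderReflection N bonds) (a : ℕ → ℕ → ℝ) (i : ℕ) (h : i ∈ R.Λm) :
    gaugeS R a i * a i (R.θ i) = |a i (R.θ i)| := by
  simp only [gaugeS, h, if_true]
  split_ifs with h
  · rw [abs_of_neg h]; ring
  · rw [abs_of_nonneg (not_lt.1 h)]; ring

lemma gaugeS_p (R : LadderReflection N bonds) (a : ℕ → ℕ → ℝ) (ha : ∀ i j, a j i = - a i j)
    (i : ℕ) (h : i ∈ R.Λp) :
    gaugeS R a i * a i (R.θ i) = -|a i (R.θ i)| := by
  have h1 := gaugeS_m R a _ (R.swap_p i h)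
  rw [R.invol i (refl_lt_p R i h), gaugeS_theta R a i (refl_lt_p R i h), ha i (R.θ i), abs_neg]
    at h1
  linarith

end Final

section Final2
variable {V : Type*} [NormedAddCommGroup V] [InnerProductSpace ℂ V] [FiniteDimensional ℂ V]
  {N : ℕ} {b : ℕ → BondType → (V →ₗ[ℂ] V)} {c : ℕ → (V →ₗ[ℂ] V)}
  {bonds : List (ℕ × ℕ × BondType)}

/-- A basis of the vertices adapted to the reflection. -/
def fold (R : LadderReflection N bonds) : {v // v ∈ R.Λm} ⊕ {v // v ∈ R.Λm} → ℕ :=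
  Sum.elim (fun v => v.1) (fun v => R.θ v.1)

/-- The gauge signs in the adapted basis. -/
def foldS (R : LadderReflection N bonds) (a : ℕ → ℕ → ℝ) :
    {v // v ∈ R.Λm} ⊕ {v // v ∈ R.Λm} → ℝ :=
  Sum.elim (fun _ => 1) (fun v => gaugeS R a v.1)

lemma fold_inj (R : LadderReflection N bonds) : Function.Injective (fold R) := by
  have key : ∀ v w : {v // v ∈ R.Λm}, v.1 = R.θ w.1 → False := fun v w h =>
    refl_not R _ (R.swap_m _ w.2) (h ▸ v.2)
  rintro (v | v) (w | w) h <;> simp only [fold, Sum.elim_inl, Sum.elim_inr] at h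
  · rw [Subtype.ext h]
  · exact (key _ _ h).elim
  · exact (key _ _ h.symm).elim
  · have := congrArg R.θ h
    rw [R.invol _ (refl_lt_m R _ v.2), R.invol _ (refl_lt_m R _ w.2)] at this
    rw [Subtype.ext this]

lemma fold_image (R : LadderReflection N bonds) :
    Finset.univ.image (fold R) = Finset.range (4 * N) := by
  ext i
  simp only [Finset.mem_image, Finset.mem_univ, true_and, ← R.union, Finset.mem_union]
  constructor
  · rintro ⟨v | v, rfl⟩
    · exact Or.inl v.2
    · exact Or.inr (R.swap_m _ v.2)
  · rintro (h | h)
    · exact ⟨Sum.inl ⟨i, h⟩, rfl⟩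
    · exact ⟨Sum.inr ⟨R.θ i, R.swap_p i h⟩, R.invol i (refl_lt_p R i h)⟩

lemma foldS_sq (R : LadderReflection N bonds) (a : ℕ → ℕ → ℝ) (p) :
    foldS R a p * foldS R a p = 1 := by
  rcases p with p | p
  · simp [foldS]
  · exact gaugeS_sq R a _

lemma cross_zero (R : LadderReflection N bonds) {J : ℕ × ℕ → ℝ}
    {a : ℕ → ℕ → ℝ} (ha : Adm bonds J a) (v w : ℕ) (hv : v ∈ R.Λm) (hw : w ∈ R.Λm)
    (hne : v ≠ w) : a v (R.θ w) = 0 := by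
  have hvp : v ∉ R.Λp := fun h => refl_not R _ h hv
  have hwp := refl_not R _ (R.swap_m w hw)
  have hiv := R.invol v (refl_lt_m R v hv)
  have hiw := R.invol w (refl_lt_m R w hw)
  refine ha.zero _ _ ?_ ?_
  · intro t ht
    rcases R.sides _ ht with h | h | h | h
    · exact hwp h.2
    · exact hvp h.1
    · simp only at h
      have := congrArg R.θ h
      rw [hiv, hiw] at this; exact hne this
    · simp only [hiw] at h; exact hne h.symm
  · intro t ht
    rcases R.sides _ ht with h | h | h | h
    · exact hwp h.1
    · exact hvp h.2
    · simp only [hiw] at h; exact hne h.symm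
    · simp only at h
      have := congrArg R.θ h
      rw [hiv, hiw] at this; exact hne this

lemma Kmat_blocks (R : LadderReflection N bonds) {J : ℕ × ℕ → ℝ}
    {a a' : ℕ → ℕ → ℝ} (ha : Adm bonds J a) (hanti : ∀ i j, a' j i = - a' i j)
    (hc : ∀ v ∈ R.Λm, ∀ w ∈ R.Λm, a' v (R.θ w) = a v (R.θ w))
    (P Q : Matrix {v // v ∈ R.Λm} {v // v ∈ R.Λm} ℂ)
    (hP : ∀ v w : {v // v ∈ R.Λm}, P v w = Complex.I * ((a' v.1 w.1 : ℝ) : ℂ))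
    (hQ : ∀ v w : {v // v ∈ R.Λm}, Q v w = Complex.I *
      ((gaugeS R a v.1 * gaugeS R a w.1 * a' (R.θ v.1) (R.θ w.1) : ℝ) : ℂ)) :
    Kmat (fold R) (foldS R a) a' = Matrix.fromBlocks P
      (Matrix.diagonal fun v => Complex.I * ((|a v.1 (R.θ v.1)| : ℝ) : ℂ))
      (Matrix.diagonal fun v => -(Complex.I * ((|a v.1 (R.θ v.1)| : ℝ) : ℂ))) Q := by
  ext (v | v) (w | w) <;>
    simp only [Kmat, fold, foldS, Sum.elim_inl, Sum.elim_inr, Matrix.of_apply,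
      Matrix.fromBlocks_apply₁₁, Matrix.fromBlocks_apply₁₂, Matrix.fromBlocks_apply₂₁,
      Matrix.fromBlocks_apply₂₂]
  · rw [hP]; simp
  · rw [hc _ v.2 _ w.2, Matrix.diagonal_apply]
    split_ifs with h
    · subst h; rw [one_mul, gaugeS_m R a _ v.2]
    · rw [cross_zero R ha _ _ v.2 w.2 (fun h' => h (Subtype.ext h'))]; simp
  · rw [hanti w.1 (R.θ v.1), hc _ w.2 _ v.2, Matrix.diagonal_apply]
    split_ifs with h
    · subst h; rw [← gaugeS_m R a _ v.2]; push_cast; ring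
    · rw [cross_zero R ha _ _ w.2 v.2 (fun h' => h (Subtype.ext h'.symm))]; simp
  · rw [hQ]

/-- The energy comparison: reflecting does not raise the ground state energy. -/
lemma energy_compare (R : LadderReflection N bonds) {J : ℕ × ℕ → ℝ}
    {a : ℕ → ℕ → ℝ} (ha : Adm bonds J a) (t t1 t2 : ℝ)
    (ha1 : Adm bonds J (reflA R.θ R.Λp (gaugeS R a) a))
    (ha2 : Adm bonds J (reflA R.θ R.Λm (gaugeS R a) a))
    (h : HasTr (Kmat (fold R) (foldS R a) a) t)
    (h1 : HasTr (Kmat (fold R) (foldS R a) (reflA R.θ R.Λp (gaugeS R a) a)) t1)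
    (h2 : HasTr (Kmat (fold R) (foldS R a) (reflA R.θ R.Λm (gaugeS R a) a)) t2) :
    2 * t ≤ t1 + t2 := by
  let P : Matrix {v // v ∈ R.Λm} {v // v ∈ R.Λm} ℂ :=
    Matrix.of fun v w => Complex.I * ((a v.1 w.1 : ℝ) : ℂ)
  let Q : Matrix {v // v ∈ R.Λm} {v // v ∈ R.Λm} ℂ :=
    Matrix.of fun v w => Complex.I *
      ((gaugeS R a v.1 * gaugeS R a w.1 * a (R.θ v.1) (R.θ w.1) : ℝ) : ℂ)
  have hnp : ∀ v ∈ R.Λm, v ∉ R.Λp := fun v hv h => refl_not R _ h hv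
  have hnm : ∀ v ∈ R.Λm, R.θ v ∉ R.Λm := fun v hv => refl_not R _ (R.swap_m v hv)
  rw [Kmat_blocks R ha ha.anti (fun _ _ _ _ => rfl) P Q (fun _ _ => rfl) (fun _ _ => rfl)] at h
  rw [Kmat_blocks R ha ha1.anti (fun v hv w hw => by simp [reflA, hnp v hv]) P (-P)
    (fun v w => by simp [reflA, hnp v.1 v.2, P]) (fun v w => by
      have e1 := R.invol _ (refl_lt_m R _ v.2)
      have e2 := R.invol _ (refl_lt_m R _ w.2)
      have e3 := gaugeS_theta R a _ (refl_lt_m R _ v.2)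
      have e4 := gaugeS_theta R a _ (refl_lt_m R _ w.2)
      have e5 : ((gaugeS R a v.1 : ℝ) : ℂ) * (gaugeS R a v.1 : ℝ) = 1 := by
        exact_mod_cast gaugeS_sq R a v.1
      have e6 : ((gaugeS R a w.1 : ℝ) : ℂ) * (gaugeS R a w.1 : ℝ) = 1 := by
        exact_mod_cast gaugeS_sq R a w.1
      simp only [reflA, R.swap_m _ v.2, R.swap_m _ w.2, and_self, if_true, e1, e2, e3, e4, P,
        Matrix.neg_apply, Matrix.of_apply]
      push_cast
      linear_combination Complex.I * a v.1 w.1 * e5 + Complex.I * a v.1 w.1 *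
        ((gaugeS R a v.1 : ℝ) : ℂ) * (gaugeS R a v.1 : ℝ) * e6)] at h1
  rw [Kmat_blocks R ha ha2.anti (fun v hv w hw => by simp [reflA, hnm w hw]) (-Q) Q
    (fun v w => by
      simp only [reflA, v.2, w.2, and_self, if_true, Q, Matrix.neg_apply, Matrix.of_apply]
      push_cast; ring)
    (fun v w => by simp [reflA, hnm v.1 v.2, Q])] at h2
  exact trace_reflection P Q _ (fun v => abs_nonneg _) t t1 t2 h h1 h2

end Final2

section Flux
variable {V : Type*} [NormedAddCommGroup V] [InnerProductSpace ℂ V] [FiniteDimensional ℂ V]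
  {N : ℕ} {b : ℕ → BondType → (V →ₗ[ℂ] V)} {c : ℕ → (V →ₗ[ℂ] V)}
  {bonds : List (ℕ × ℕ × BondType)}

lemma reflA_mirror (R : LadderReflection N bonds) (a : ℕ → ℕ → ℝ) (i j : ℕ)
    (h : (i ∈ R.Λm ∧ j ∈ R.Λm) ∨ (i ∈ R.Λp ∧ j ∈ R.Λp)) :
    reflA R.θ R.Λp (gaugeS R a) a (R.θ i) (R.θ j) =
      -(gaugeS R a i * gaugeS R a j * reflA R.θ R.Λp (gaugeS R a) a i j) := by
  rcases h with ⟨hi, hj⟩ | ⟨hi, hj⟩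
  · have hi' := refl_lt_m R _ hi
    have hj' := refl_lt_m R _ hj
    have hn : i ∉ R.Λp := fun h => refl_not R _ h hi
    simp only [reflA, R.swap_m _ hi, R.swap_m _ hj, and_self, if_true, hn, false_and, if_false,
      R.invol _ hi', R.invol _ hj', gaugeS_theta R a _ hi', gaugeS_theta R a _ hj']
  · have hn : R.θ i ∉ R.Λp := fun h => refl_not R _ h (R.swap_p _ hi)
    simp only [reflA, hi, hj, and_self, if_true, hn, false_and, if_false]
    linear_combination (-(a (R.θ i) (R.θ j))) * gaugeS_sq R a i -
      (a (R.θ i) (R.θ j)) * gaugeS R a i * gaugeS R a i * gaugeS_sq R a j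

lemma reflA_cross (R : LadderReflection N bonds) (a : ℕ → ℕ → ℝ) (i : ℕ) (hi : i < 4 * N) :
    reflA R.θ R.Λp (gaugeS R a) a i (R.θ i) = a i (R.θ i) := by
  have h : ¬ (i ∈ R.Λp ∧ R.θ i ∈ R.Λp) := fun h => refl_not R _ h.2 (R.swap_p _ h.1)
  simp only [reflA, h, if_false]

lemma flux (hb : BondFacts N bonds) (R : LadderReflection N bonds) {J : ℕ × ℕ → ℝ}
    {a : ℕ → ℕ → ℝ} (ha : Adm bonds J a) (hJ : ∀ i j, J (i, j) = J (j, i))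
    (ha1 : Adm bonds J (reflA R.θ R.Λp (gaugeS R a) a))
    (L : Loop) (hL : L.IsLoopOf bonds) (M : ℕ) (hlen : L.len = 2 * M + 2)
    (hnondeg : ∀ k < L.len, J (L.v k, L.v ((k + 1) % L.len)) ≠ 0)
    (hrefl : ∀ k < L.len, R.θ (L.v k) = L.v (2 * M + 1 - k)) :
    ∏ k ∈ Finset.range L.len,
      reflA R.θ R.Λp (gaugeS R a) a (L.v k) (L.v ((k + 1) % L.len)) < 0 := by
  obtain ⟨hlen3, hinj, hbond⟩ := hL
  set a' := reflA R.θ R.Λp (gaugeS R a) a with ha'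
  have hlt : ∀ k < L.len, L.v k < 4 * N := fun k hk => by
    rcases hbond k hk with h | h
    · exact hb.lt1 _ h
    · exact hb.lt2 _ h
  rw [hlen] at hinj hbond hnondeg hrefl hlt hlen3 ⊢
  set v := L.v with hv
  set F : ℕ → ℝ := fun k => a' (v k) (v ((k + 1) % (2 * M + 2))) with hF
  have hF0 : ∀ k < 2 * M + 2, F k ≠ 0 := fun k hk h => by
    have h1 := adm_val ha1 hJ _ _ _ (hbond k hk)
    have h2 : a' (v k) (v ((k + 1) % (2 * M + 2))) = 0 := h
    rw [h2, abs_zero] at h1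
    exact hnondeg k hk (abs_eq_zero.1 h1.symm)
  have hstep : ∀ k < M, (v k ∈ R.Λm ∧ v (k + 1) ∈ R.Λm) ∨ (v k ∈ R.Λp ∧ v (k + 1) ∈ R.Λp) := by
    intro k hk
    have hmod : (k + 1) % (2 * M + 2) = k + 1 := Nat.mod_eq_of_lt (by omega)
    have h := hbond k (by omega)
    rw [hmod] at h
    have n1 : R.θ (v k) ≠ v (k + 1) := fun h => by
      rw [hrefl k (by omega)] at h
      have := hinj _ (by omega) _ (by omega) h
      omega
    have n2 : R.θ (v (k + 1)) ≠ v k := fun h => by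
      rw [hrefl (k + 1) (by omega)] at h
      have := hinj _ (by omega) _ (by omega) h
      omega
    rcases h with h | h
    · rcases R.sides _ h with h | h | h | h
      · exact Or.inl h
      · exact Or.inr h
      · exact (n1 h).elim
      · exact (n2 h).elim
    · rcases R.sides _ h with h | h | h | h
      · exact Or.inl h.symm
      · exact Or.inr h.symm
      · exact (n2 h).elim
      · exact (n1 h).elim
  have hside : (v 0 ∈ R.Λm ∧ v M ∈ R.Λm) ∨ (v 0 ∈ R.Λp ∧ v M ∈ R.Λp) := by
    have : ∀ m ≤ M, (v 0 ∈ R.Λm ∧ v m ∈ R.Λm) ∨ (v 0 ∈ R.Λp ∧ v m ∈ R.Λp) := by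
      intro m
      induction m with
      | zero =>
        intro _
        have h := hlt 0 (by omega)
        rw [← Finset.mem_range, ← R.union, Finset.mem_union] at h
        rcases h with h | h
        · exact Or.inl ⟨h, h⟩
        · exact Or.inr ⟨h, h⟩
      | succ m ih =>
        intro hm
        rcases ih (by omega) with h | h <;> rcases hstep m (by omega) with h' | h'
        · exact Or.inl ⟨h.1, h'.2⟩
        · exact (refl_not R _ h'.1 h.2).elim
        · exact (refl_not R _ h.2 h'.1).elim
        · exact Or.inr ⟨h.1, h'.2⟩
    exact this M le_rfl
  set s := gaugeS R a with hs
  have hsq : ∀ i, s i * s i = 1 := gaugeS_sq R a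
  have hmir : ∀ k < M, F (2 * M - k) = s (v k) * s (v (k + 1)) * F k := by
    intro k hk
    have e1 : (2 * M - k + 1) % (2 * M + 2) = 2 * M + 1 - k := by
      rw [Nat.mod_eq_of_lt (by omega)]; omega
    have e2 : (k + 1) % (2 * M + 2) = k + 1 := Nat.mod_eq_of_lt (by omega)
    have e3 : 2 * M - k = 2 * M + 1 - (k + 1) := by omega
    simp only [hF, e1, e2]
    rw [e3, ← hrefl k (by omega), ← hrefl (k + 1) (by omega), ha1.anti (R.θ (v k))]
    have hm : a' (R.θ (v k)) (R.θ (v (k + 1))) = -(s (v k) * s (v (k + 1)) * a' (v k) (v (k + 1))) :=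
      reflA_mirror R a _ _ (hstep k hk)
    rw [hm, neg_neg]
  have hpair : ∀ m ≤ M, 0 < ((∏ k ∈ Finset.range m, F k) *
      ∏ k ∈ Finset.range m, F (2 * M - k)) * (s (v 0) * s (v m)) := by
    intro m
    induction m with
    | zero => intro _; simp [hsq]
    | succ m ih =>
      intro hm
      have h1 := ih (by omega)
      have h2 : 0 < F m * F m := mul_self_pos.2 (hF0 m (by omega))
      have h3 := mul_pos h1 h2
      rw [Finset.prod_range_succ, Finset.prod_range_succ, hmir m (by omega)]
      refine h3.trans_eq ?_
      linear_combination (-((∏ k ∈ Finset.range m, F k) *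
        (∏ k ∈ Finset.range m, F (2 * M - k)) * (s (v 0) * s (v m)) * (F m * F m))) *
          hsq (v (m + 1))
  have hprod : ∏ k ∈ Finset.range (2 * M + 2), F k =
      ((∏ k ∈ Finset.range M, F k) * ∏ k ∈ Finset.range M, F (2 * M - k)) *
        (F M * F (2 * M + 1)) := by
    have e : ∏ k ∈ Finset.range M, F (2 * M - k) = ∏ k ∈ Finset.range M, F (M + 1 + k) := by
      rw [← Finset.prod_range_reflect (fun k => F (M + 1 + k)) M]
      refine Finset.prod_congr rfl fun k hk => ?_
      have := Finset.mem_range.1 hk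
      congr 1; omega
    rw [e, Finset.prod_range_succ, show 2 * M + 1 = (M + 1) + M by omega, Finset.prod_range_add,
      Finset.prod_range_succ]
    ring
  have hFM : F M = a (v M) (R.θ (v M)) := by
    have e : (M + 1) % (2 * M + 2) = 2 * M + 1 - M := by
      rw [Nat.mod_eq_of_lt (by omega)]; omega
    simp only [hF, e]
    rw [← hrefl M (by omega)]
    exact reflA_cross R a _ (hlt M (by omega))
  have hF1 : F (2 * M + 1) = - a (v 0) (R.θ (v 0)) := by
    have e : (2 * M + 1 + 1) % (2 * M + 2) = 0 := Nat.mod_self _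
    have e' : v (2 * M + 1) = R.θ (v 0) := (hrefl 0 (by omega)).symm
    simp only [hF, e, e']
    rw [ha1.anti (v 0) (R.θ (v 0))]
    exact congrArg Neg.neg (reflA_cross R a _ (hlt 0 (by omega)))
  have hX : a (v M) (R.θ (v M)) ≠ 0 := hFM ▸ hF0 M (by omega)
  have hY : a (v 0) (R.θ (v 0)) ≠ 0 := fun h => hF0 (2 * M + 1) (by omega) (by rw [hF1, h, neg_zero])
  have hcr : 0 < (s (v M) * a (v M) (R.θ (v M))) * (s (v 0) * a (v 0) (R.θ (v 0))) := by
    rcases hside with ⟨h0, hM⟩ | ⟨h0, hM⟩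
    · rw [hs, gaugeS_m R a _ h0, gaugeS_m R a _ hM]
      exact mul_pos (abs_pos.2 hX) (abs_pos.2 hY)
    · rw [hs, gaugeS_p R a ha.anti _ h0, gaugeS_p R a ha.anti _ hM, neg_mul_neg]
      exact mul_pos (abs_pos.2 hX) (abs_pos.2 hY)
  have hfin := mul_pos (hpair M le_rfl) hcr
  have hgoal : ∏ k ∈ Finset.range (2 * M + 2), F k < 0 := by
    rw [hprod, hFM, hF1, ← neg_pos]
    refine hfin.trans_eq ?_
    set Z := (∏ k ∈ Finset.range M, F k) * ∏ k ∈ Finset.range M, F (2 * M - k)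
    linear_combination (Z * a (v M) (R.θ (v M)) * a (v 0) (R.θ (v 0))) * hsq (v 0) +
      (Z * a (v M) (R.θ (v M)) * a (v 0) (R.θ (v 0)) * (s (v 0) * s (v 0))) * hsq (v M)
  exact hgoal

lemma sector_loop (hg : GenFacts N b c) (hb : BondFacts N bonds) {J : ℕ × ℕ → ℝ}
    {a : ℕ → ℕ → ℝ} (ha : Adm bonds J a) (hJ : ∀ i j, J (i, j) = J (j, i))
    (ψ : V) (hψ : ψ ∈ sector b J a bonds) (i j : ℕ) (t : BondType)
    (h : (i, j, t) ∈ bonds ∨ (j, i, t) ∈ bonds) :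
    (J (i, j) : ℂ) • uOp b (i, j, t) ψ = (a i j : ℂ) • ψ := by
  rcases h with h | h
  · exact hψ _ h
  · have h1 := hψ _ h
    have h2 : uOp b (i, j, t) = - uOp b (j, i, t) := by
      have := b_anti hg hb _ h
      simp only [uOp] at this ⊢
      rw [this, smul_neg, neg_neg]
    simp only at h1
    rw [h2, hJ, LinearMap.neg_apply, smul_neg, h1, ha.anti j i]
    push_cast
    rw [neg_smul]

lemma vortex_val (hg : GenFacts N b c) (hb : BondFacts N bonds) {J : ℕ × ℕ → ℝ}
    {a : ℕ → ℕ → ℝ} (ha : Adm bonds J a) (hJ : ∀ i j, J (i, j) = J (j, i))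
    (ψ : V) (hψ : ψ ∈ sector b J a bonds) (L : Loop) (hL : L.IsLoopOf bonds)
    (hnondeg : ∀ k < L.len, J (L.v k, L.v ((k + 1) % L.len)) ≠ 0)
    (hneg : ∏ k ∈ Finset.range L.len, a (L.v k) (L.v ((k + 1) % L.len)) < 0) :
    vortexOp b L ψ =
        ((Real.sign (∏ k ∈ Finset.range L.len,
          J (L.v k, L.v ((k + 1) % L.len))) : ℝ) : ℂ) • ψ := by
  have key : ∀ n ≤ L.len, ((∏ k ∈ Finset.range n, J (L.v k, L.v ((k + 1) % L.len)) : ℝ) : ℂ) •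
      ((List.range n).map fun k => uOp b (L.v k, L.v ((k + 1) % L.len), L.t k)).prod ψ =
      ((∏ k ∈ Finset.range n, a (L.v k) (L.v ((k + 1) % L.len)) : ℝ) : ℂ) • ψ := by
    intro n
    induction n with
    | zero => intro _; simp
    | succ n ih =>
      intro hn
      have h1 := sector_loop hg hb ha hJ ψ hψ _ _ _ (hL.2.2 n (by omega))
      rw [List.range_succ, List.map_append, List.prod_append, Finset.prod_range_succ,
        Finset.prod_range_succ, List.map_singleton, List.prod_singleton, Module.End.mul_apply,
        Complex.ofReal_mul, Complex.ofReal_mul, mul_smul, ← map_smul, h1, map_smul, smul_comm,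
        ih (by omega), smul_smul, mul_comm]
  have hk := key L.len le_rfl
  have habs : |∏ k ∈ Finset.range L.len, a (L.v k) (L.v ((k + 1) % L.len))| =
      |∏ k ∈ Finset.range L.len, J (L.v k, L.v ((k + 1) % L.len))| := by
    rw [Finset.abs_prod, Finset.abs_prod]
    exact Finset.prod_congr rfl fun k hk =>
      adm_val ha hJ _ _ _ (hL.2.2 k (Finset.mem_range.1 hk))
  have hne : ∏ k ∈ Finset.range L.len, J (L.v k, L.v ((k + 1) % L.len)) ≠ 0 :=
    Finset.prod_ne_zero_iff.2 fun k hk => hnondeg k (Finset.mem_range.1 hk)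
  rw [abs_of_neg hneg] at habs
  set A := ∏ k ∈ Finset.range L.len, a (L.v k) (L.v ((k + 1) % L.len))
  set B := ∏ k ∈ Finset.range L.len, J (L.v k, L.v ((k + 1) % L.len))
  have hBC : (B : ℂ) ≠ 0 := by exact_mod_cast hne
  apply smul_right_injective V hBC
  simp only [vortexOp, LinearMap.neg_apply, smul_neg, smul_smul]
  rw [hk, ← neg_smul]
  congr 1
  rw [← Complex.ofReal_neg, ← Complex.ofReal_mul, habs]
  congr 1
  rcases lt_or_gt_of_ne hne with h | h
  · rw [Real.sign_of_neg h, abs_of_neg h]; ring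
  · rw [Real.sign_of_pos h, abs_of_pos h]; ring

end Flux

/-- Let `θ` be a reflection of the open or closed ladder of length
`N`, let the symmetric real couplings satisfy `|J_{(θi, θj)}| = |J_{(ij)}|` on all
bonds, and let `H̃` be the fermionic ladder Hamiltonian built from a Majorana family
`(b_k^x, b_k^y, b_k^z, c_k)`. Let `C = (i_1, …, i_{2L})` be a loop of the ladder with
all couplings on its bonds nonzero and with `θ i_k = i_{2L+1-k}` (so `θ(C) = -C`).
Then there is an eigenvector `ψ` of `H̃` for its least eigenvalue with
`B̃(C) ψ = sgn(∏_{(ij)∈C} J_{(ij)}) ψ`; in particular, if all the couplings have the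
same sign, `C` is vortex-free in this ground state. -/
theorem reflection_symmetric_loop_vortex_configuration_fermionic
    {V : Type*} [NormedAddCommGroup V] [InnerProductSpace ℂ V]
    [FiniteDimensional ℂ V] [Nontrivial V]
    (N : ℕ) (hN : 2 ≤ N)
    (bonds : List (ℕ × ℕ × BondType))
    (hbonds : bonds = openBonds N ∨ bonds = closedBonds N)
    (R : LadderReflection N bonds)
    (J : ℕ × ℕ → ℝ) (hJsymm : ∀ i j, J (i, j) = J (j, i))
    (hJrefl : ∀ e ∈ bonds, |J (R.θ e.1, R.θ e.2.1)| = |J (e.1, e.2.1)|)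
    (b : ℕ → BondType → (V →ₗ[ℂ] V)) (c : ℕ → (V →ₗ[ℂ] V))
    (hbc : IsLadderMajorana N b c)
    (L : Loop) (hL : L.IsLoopOf bonds)
    (LL : ℕ) (hLL : 1 ≤ LL) (hlen : L.len = 2 * LL)
    (hnondeg : ∀ k < L.len, J (L.v k, L.v ((k + 1) % L.len)) ≠ 0)
    (hrefl : ∀ k < L.len, R.θ (L.v k) = L.v (2 * LL - 1 - k)) :
    ∃ ψ : V,
      Module.End.HasEigenvector (fermH J b c bonds)
        ((leastEig (fermH J b c bonds) : ℝ) : ℂ) ψ ∧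
      vortexOp b L ψ =
        ((Real.sign (∏ k ∈ Finset.range L.len,
          J (L.v k, L.v ((k + 1) % L.len))) : ℝ) : ℂ) • ψ := by
  have hb := bond_facts N hN bonds hbonds
  have hg := gen_facts hbc
  obtain ⟨v0, hv0⟩ := exists_ne (0 : V)
  obtain ⟨E0, ψ0, -, h0, hE0, hmin0⟩ := exists_min_eig (fermH J b c bonds)
    ((LinearMap.isSymmetric_iff_isSelfAdjoint _).2 (H_selfadj hg hb J)) ⊤
    (fun _ _ => Submodule.mem_top) ⟨v0, Submodule.mem_top, hv0⟩
  have hleast : leastEig (fermH J b c bonds) = E0 :=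
    leastEig_eq _ E0 ψ0 h0 hE0 fun E' φ h h' => hmin0 E' φ Submodule.mem_top h h'
  obtain ⟨a, ha, φ, hφ, hφ0, hφE⟩ := exists_joint hg hb J (E0 : ℂ) ψ0 h0 hE0
  have ha1 := reflA_adm hb R ha hJsymm hJrefl R.Λp (refl_lt_p R) (gaugeS R a) (gaugeS_abs R a)
  have ha2 := reflA_adm hb R ha hJsymm hJrefl R.Λm (refl_lt_m R) (gaugeS R a) (gaugeS_abs R a)
  obtain ⟨t, ht⟩ := exists_hasTr _ (Kmat_herm (fold R) (foldS R a) a ha.anti)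
  obtain ⟨t1, ht1⟩ := exists_hasTr _ (Kmat_herm (fold R) (foldS R a) _ ha1.anti)
  obtain ⟨t2, ht2⟩ := exists_hasTr _ (Kmat_herm (fold R) (foldS R a) _ ha2.anti)
  have hcmp := energy_compare R ha t t1 t2 ha1 ha2 ht ht1 ht2
  obtain ⟨E1, ψ1, hψ1, h10, hE1, hmin1⟩ := sector_min hg hb J _ ha1
  obtain ⟨E2, ψ2, hψ2, h20, hE2, hmin2⟩ := sector_min hg hb J _ ha2
  have k0 := energy_sector hg hb J a ha (fold R) (fold_inj R) (fold_image R) (foldS R a)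
    (foldS_sq R a) t ht φ hφ hφ0 E0 hφE
    (fun E' φ' _ h h' => hmin0 E' φ' Submodule.mem_top h h')
  have k1 := energy_sector hg hb J _ ha1 (fold R) (fold_inj R) (fold_image R) (foldS R a)
    (foldS_sq R a) t1 ht1 ψ1 hψ1 h10 E1 hE1 hmin1
  have k2 := energy_sector hg hb J _ ha2 (fold R) (fold_inj R) (fold_image R) (foldS R a)
    (foldS_sq R a) t2 ht2 ψ2 hψ2 h20 E2 hE2 hmin2
  have l1 := hmin0 E1 ψ1 Submodule.mem_top h10 hE1
  have l2 := hmin0 E2 ψ2 Submodule.mem_top h20 hE2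
  have hEE : E1 = E0 := by linarith
  refine ⟨ψ1, ?_, ?_⟩
  · rw [hleast, ← hEE]
    exact Module.End.hasEigenvector_iff.2 ⟨Module.End.mem_eigenspace_iff.2 hE1, h10⟩
  · refine vortex_val hg hb ha1 hJsymm ψ1 hψ1 L hL hnondeg ?_
    obtain ⟨M, rfl⟩ : ∃ M, LL = M + 1 := ⟨LL - 1, by omega⟩
    exact flux hb R ha hJsymm ha1 L hL M (by omega) hnondeg
      (fun k hk => by rw [hrefl k hk]; congr 1)
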